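/- arXiv:2502.01950 — 4 statements merged into one kernel-verified Lean document; each statement's English description precedes it below -/
import Mathlib

section
/- Let G be a finite group, M a subnormal subgroup of G, χ an irreducible character of G, and ψ an irreducible constituent of the restriction χ|_M. Then cod(ψ) divides cod(χ). -/
open CategoryTheory

/-- The kernel of (the character of) a finite-dimensional complex representation. -/
noncomputable def charKer {G : Type} [Group G] (V : FDRep ℂ G) : Subgroup G :=
  MonoidHom.ker (Representation.asGroupHom V.ρ)

/-- The codegree of a character: `|G : ker χ| / χ(1)`. -/
noncomputable def codeg {G : Type} [Group G] (V : FDRep ℂ G) : ℕ :=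
  (charKer V).index / Module.finrank ℂ V

/-- The set of codegrees of irreducible characters of `G`. -/
def codSet (G : Type) [Group G] : Set ℕ :=
  {n | ∃ V : FDRep ℂ G, Simple V ∧ codeg V = n}

/-- Inner product of class functions on a finite group. -/
noncomputable def innerChar (G : Type) [Group G] (f g : G → ℂ) : ℂ :=
  (∑ᶠ x : G, f x * starRingEnd ℂ (g x)) / Nat.card G

open scoped Classical in
/-- The induced character `θ^G` of a character `θ` of a subgroup `H ≤ G`. -/
noncomputable def indChar {G : Type} [Group G] (H : Subgroup G) (θ : FDRep ℂ ↥H) : G → ℂ :=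
  fun g => (∑ᶠ x : G, if h : x * g * x⁻¹ ∈ H then θ.character ⟨x * g * x⁻¹, h⟩ else 0) /
    Nat.card ↥H

/-- `M` is subnormal in `G`: there is a chain `M = M₀ ⊴ M₁ ⊴ ⋯ ⊴ Mₖ = G`. -/
def IsSubnormal {G : Type} [Group G] (M : Subgroup G) : Prop :=
  ∃ (n : ℕ) (c : Fin (n + 1) → Subgroup G), c 0 = M ∧ c (Fin.last n) = ⊤ ∧
    ∀ i : Fin n, c i.castSucc ≤ c i.succ ∧ ((c i.castSucc).subgroupOf (c i.succ)).Normal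

open Module

/-- Schur property: nontrivial and every equivariant endomorphism is a scalar. -/
structure SchurIrr {G V : Type} [Group G] [AddCommGroup V] [Module ℂ V]
    (ρ : Representation ℂ G V) : Prop where
  pos : 0 < finrank ℂ V
  scalar : ∀ k : V →ₗ[ℂ] V, (∀ g, k ∘ₗ ρ g = ρ g ∘ₗ k) → ∃ c : ℂ, k = c • LinearMap.id

theorem isIntegral_trace_of_pow_eq {W : Type} [AddCommGroup W] [Module ℂ W] [FiniteDimensional ℂ W]
    (b : Module.End ℂ W) (i j : ℕ) (hij : i < j) (h : b ^ i = b ^ j) :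
    IsIntegral ℤ (LinearMap.trace ℂ W b) := by
  rw [LinearMap.trace_eq_matrix_trace ℂ (Module.finBasis ℂ W),
    Matrix.trace_eq_sum_roots_charpoly, LinearMap.charpoly_toMatrix]
  apply IsIntegral.multiset_sum
  intro μ hμ
  have hr : b.charpoly.IsRoot μ := Polynomial.isRoot_of_mem_roots hμ
  rw [← Module.End.hasEigenvalue_iff_isRoot_charpoly] at hr
  obtain ⟨v, hv⟩ := hr.exists_hasEigenvector
  have h1 : μ ^ i = μ ^ j := by
    have e1 := hv.pow_apply i
    have e2 := hv.pow_apply j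
    rw [h, e2] at e1
    exact (smul_left_injective ℂ hv.2 e1).symm
  refine ⟨Polynomial.X ^ j - Polynomial.X ^ i, ?_, ?_⟩
  · apply Polynomial.monic_X_pow_sub
    simpa using hij
  · simp [h1]

theorem isIntegral_of_sum {W : Type} [AddCommGroup W] [Module ℂ W] [FiniteDimensional ℂ W]
    [Nontrivial W] (B : Submonoid (Module.End ℂ W)) (hB : (B : Set (Module.End ℂ W)).Finite)
    {ι : Type} (S : Finset ι) (β β' : ι → Module.End ℂ W) (hβ : ∀ i ∈ S, β i ∈ B)
    (hβ' : ∀ i ∈ S, β' i ∈ B) (q : ℂ)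
    (hq : ∑ i ∈ S, LinearMap.trace ℂ W (β' i) • β i = q • (1 : Module.End ℂ W)) :
    IsIntegral ℤ q := by
  have htr : ∀ i ∈ S, IsIntegral ℤ (LinearMap.trace ℂ W (β' i)) := by
    intro i hi
    have : Finite B := hB
    obtain ⟨m, n, hmn, h⟩ := Finite.exists_ne_map_eq_of_infinite
      (fun n : ℕ => (⟨β' i, hβ' i hi⟩ : B) ^ n)
    have h' : β' i ^ m = β' i ^ n := by simpa using congrArg Subtype.val h
    rcases lt_or_gt_of_ne hmn with h1 | h1
    · exact isIntegral_trace_of_pow_eq _ m n h1 h'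
    · exact isIntegral_trace_of_pow_eq _ n m h1 h'.symm
  let R := integralClosure ℤ ℂ
  let L : Subalgebra R (Module.End ℂ W) := Algebra.adjoin R (B : Set (Module.End ℂ W))
  have hL : Subalgebra.toSubmodule L = Submodule.span R (B : Set (Module.End ℂ W)) := by
    rw [Algebra.adjoin_eq_span, Submonoid.closure_eq]
  have hfg : (Subalgebra.toSubmodule L).FG := by
    rw [hL]; exact Submodule.fg_span hB
  have hmem : q • (1 : Module.End ℂ W) ∈ L := by
    rw [← hq]
    apply Subalgebra.sum_mem
    intro i hi
    have : LinearMap.trace ℂ W (β' i) • β i =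
      (⟨LinearMap.trace ℂ W (β' i), htr i hi⟩ : R) • β i := rfl
    rw [this]
    exact L.smul_mem (Algebra.subset_adjoin (hβ i hi)) _
  have hint : IsIntegral R (q • (1 : Module.End ℂ W)) :=
    IsIntegral.of_mem_of_fg L hfg _ hmem
  have h2 : IsIntegral R (algebraMap ℂ (Module.End ℂ W) q) := by
    rwa [Algebra.algebraMap_eq_smul_one]
  rw [isIntegral_algebraMap_iff (FaithfulSMul.algebraMap_injective ℂ (Module.End ℂ W))] at h2
  exact isIntegral_trans q h2

theorem dvd_of_isIntegral (a b : ℕ) (hb : 0 < b) (h : IsIntegral ℤ ((a : ℂ) / b)) : b ∣ a := by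
  have h1 : IsIntegral ℤ ((a : ℚ) / b) := by
    rw [← isIntegral_algebraMap_iff (B := ℂ) (algebraMap ℚ ℂ).injective]
    simpa using h
  obtain ⟨z, hz⟩ := IsIntegrallyClosed.isIntegral_iff.mp h1
  have hb' : (b : ℚ) ≠ 0 := by positivity
  rw [eq_div_iff hb'] at hz
  have : (a : ℤ) = b * z := by
    have : (z : ℚ) * b = a := by simpa using hz
    rw [mul_comm]; exact_mod_cast this.symm
  exact Int.natCast_dvd_natCast.mp ⟨z, this⟩

/-- Averaging yields a scalar. -/
theorem average_scalar {G V : Type} [Group G] [Fintype G] [AddCommGroup V] [Module ℂ V]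
    [FiniteDimensional ℂ V] (ρ : Representation ℂ G V) (hρ : SchurIrr ρ) (T : V →ₗ[ℂ] V) :
    ∑ g, ρ g ∘ₗ T ∘ₗ ρ g⁻¹ =
      ((Fintype.card G : ℂ) * LinearMap.trace ℂ V T / finrank ℂ V) • LinearMap.id := by
  obtain ⟨c, hc⟩ := hρ.scalar (∑ g, ρ g ∘ₗ T ∘ₗ ρ g⁻¹) (by
    intro x
    change (∑ g, ρ g * (T * ρ g⁻¹)) * ρ x = ρ x * ∑ g, ρ g * (T * ρ g⁻¹)
    rw [Finset.sum_mul, Finset.mul_sum]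
    refine Fintype.sum_equiv (Equiv.mulLeft x⁻¹) _ _ ?_
    intro g
    rw [mul_assoc, mul_assoc, ← map_mul, ← mul_assoc (ρ x), ← map_mul]
    simp)
  rw [hc]
  congr 1
  have h := congrArg (LinearMap.trace ℂ V) hc
  have hd : (finrank ℂ V : ℂ) ≠ 0 := by exact_mod_cast hρ.pos.ne'
  rw [eq_div_iff hd]
  rw [map_sum, map_smul, LinearMap.trace_id] at h
  rw [smul_eq_mul] at h
  rw [← h]
  have : ∀ g, LinearMap.trace ℂ V (ρ g ∘ₗ T ∘ₗ ρ g⁻¹) = LinearMap.trace ℂ V T := by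
    intro g
    rw [LinearMap.trace_comp_comm', LinearMap.comp_assoc]
    congr 1
    ext v
    simp
  simp [this]

/-- every functional on `Hom(U,V)` is a trace form -/
theorem exists_trace_form {U V : Type} [AddCommGroup U] [Module ℂ U] [FiniteDimensional ℂ U]
    [AddCommGroup V] [Module ℂ V] (l : (U →ₗ[ℂ] V) →ₗ[ℂ] ℂ) :
    ∃ T : V →ₗ[ℂ] U, ∀ f, LinearMap.trace ℂ U (T ∘ₗ f) = l f := by
  let b := Module.finBasis ℂ U
  refine ⟨∑ i, (l ∘ₗ LinearMap.smulRightₗ (b.coord i)).smulRight (b i), fun f => ?_⟩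
  rw [LinearMap.trace_eq_matrix_trace ℂ b, Matrix.trace]
  have hf : f = ∑ i, (b.coord i).smulRight (f (b i)) := by
    refine b.ext fun j => ?_
    simp [LinearMap.sum_apply, Finsupp.single_apply]
  conv_rhs => rw [hf, map_sum]
  refine Finset.sum_congr rfl fun i _ => ?_
  rw [Matrix.diag_apply, LinearMap.toMatrix_apply]
  simp [LinearMap.sum_apply, Finsupp.single_apply]

theorem sum_cosets {G E : Type} [Group G] [Fintype G] [AddCommGroup E] [Module ℂ E]
    (N : Subgroup G) [Fintype (G ⧸ N)] (F : G → E) (hF : ∀ g, ∀ n ∈ N, F (g * n) = F g) :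
    ∑ g, F g = (Nat.card N : ℂ) • ∑ x : G ⧸ N, F x.out := by
  classical
  have hb : Function.Bijective (fun p : (G ⧸ N) × N => p.1.out * (p.2 : G)) := by
    constructor
    · rintro ⟨x, n⟩ ⟨y, m⟩ h
      have hx : ∀ (z : G ⧸ N) (k : N), ((z.out * (k : G) : G) : G ⧸ N) = z := by
        intro z k
        rw [QuotientGroup.mk_mul_of_mem _ k.2]
        exact Quotient.out_eq z
      have hxy : x = y := by
        rw [← hx x n, ← hx y m]; exact congrArg _ h
      subst hxy
      have : (n : G) = m := mul_left_cancel h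
      rw [Subtype.ext this]
    · intro g
      have : (g : G ⧸ N).out⁻¹ * g ∈ N := by
        rw [← QuotientGroup.eq]
        exact Quotient.out_eq _
      exact ⟨⟨(g : G ⧸ N), ⟨_, this⟩⟩, by simp⟩
  rw [← Fintype.sum_bijective _ hb (fun p => F p.1.out) F (fun p => (hF _ _ p.2.2).symm),
    Fintype.sum_prod_type, Finset.smul_sum]
  refine Finset.sum_congr rfl fun x _ => ?_
  simp [← Nat.cast_smul_eq_nsmul ℂ]
/-- The space of intertwining maps from `ψ` to the pullback of `ρ` along `φ`. -/
def homSpace {G M U V : Type} [Group G] [Group M] [AddCommGroup U] [Module ℂ U]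
    [AddCommGroup V] [Module ℂ V] (ρ : Representation ℂ G V) (ψ : Representation ℂ M U)
    (φ : M →* G) : Submodule ℂ (U →ₗ[ℂ] V) where
  carrier := {f | ∀ m u, f (ψ m u) = ρ (φ m) (f u)}
  add_mem' := by
    intro a b ha hb m u
    simp [ha m u, hb m u]
  zero_mem' := by intro m u; simp
  smul_mem' := by
    intro c a ha m u
    simp [ha m u]

/-- `A` is semi-equivariant with respect to conjugation by `g`. -/
def SemiEq {G M U : Type} [Group G] [Group M] [AddCommGroup U] [Module ℂ U]
    (ψ : Representation ℂ M U) (φ : M →* G) (g : G) (A : U ≃ₗ[ℂ] U) : Prop :=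
  ∀ m m', φ m' = g * φ m * g⁻¹ → ∀ u, A (ψ m u) = ψ m' (A u)

section core

variable {G M U V : Type} [Group G] [Group M] [AddCommGroup U] [Module ℂ U]
  [AddCommGroup V] [Module ℂ V] {ρ : Representation ℂ G V} {ψ : Representation ℂ M U}
  {φ : M →* G}

/-- `B` is the operator `f ↦ ρ g ∘ f ∘ A⁻¹`. -/
def OpRel (ρ : Representation ℂ G V) (ψ : Representation ℂ M U) (φ : M →* G) (g : G)
    (A : U ≃ₗ[ℂ] U) (B : Module.End ℂ (homSpace ρ ψ φ)) : Prop :=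
  ∀ f u, (B f).1 (A u) = ρ g (f.1 u)

theorem SemiEq.symm {g : G} {A : U ≃ₗ[ℂ] U} (h : SemiEq ψ φ g A) : SemiEq ψ φ g⁻¹ A.symm := by
  intro m m' hm u
  rw [LinearEquiv.symm_apply_eq, h m' m (by rw [hm]; group)]
  simp

theorem exists_rel (hn : φ.range.Normal) {g : G} {A : U ≃ₗ[ℂ] U} (h : SemiEq ψ φ g A) :
    ∃ B, OpRel ρ ψ φ g A B := by
  refine ⟨{ toFun := fun f => ⟨ρ g ∘ₗ f.1 ∘ₗ A.symm.toLinearMap, ?_⟩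
            map_add' := ?_
            map_smul' := ?_ }, ?_⟩
  · intro m u
    obtain ⟨m', hm'⟩ := hn.conj_mem (φ m) ⟨m, rfl⟩ g⁻¹
    have h1 := h.symm m m' hm' u
    have h2 := f.2 m' (A.symm u)
    simp only [LinearMap.comp_apply, LinearEquiv.coe_coe, h1, h2]
    rw [← Module.End.mul_apply, ← Module.End.mul_apply, ← map_mul, ← map_mul, hm']
    congr 2
    group
  · intro a b; ext u; simp
  · intro c a; ext u; simp
  · intro f u
    simp

theorem OpRel.inv {g : G} {A : U ≃ₗ[ℂ] U} {B B' : Module.End ℂ (homSpace ρ ψ φ)}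
    (h : OpRel ρ ψ φ g A B) (h' : OpRel ρ ψ φ g⁻¹ A.symm B') : B * B' = 1 := by
  ext f u
  have h1 := h (B' f) (A.symm u)
  have h2 := h' f u
  simp only [LinearEquiv.apply_symm_apply] at h1
  simp only [Module.End.mul_apply, Module.End.one_apply, h1, h2, ← map_mul]
  simp

theorem SemiEq.unique (hψ : SchurIrr ψ) (hn : φ.range.Normal) {g : G} {A A' : U ≃ₗ[ℂ] U}
    (h : SemiEq ψ φ g A) (h' : SemiEq ψ φ g A') : ∃ c : ℂ, ∀ u, A' u = c • A u := by
  obtain ⟨c, hc⟩ := hψ.scalar (A.symm.toLinearMap ∘ₗ A'.toLinearMap) (by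
    intro m
    obtain ⟨m', hm'⟩ := hn.conj_mem (φ m) ⟨m, rfl⟩ g
    ext u
    simp only [LinearMap.comp_apply, LinearEquiv.coe_coe]
    rw [h' m m' hm', LinearEquiv.symm_apply_eq, h m m' hm']
    simp)
  refine ⟨c, fun u => ?_⟩
  have := LinearMap.congr_fun hc u
  simp only [LinearMap.comp_apply, LinearEquiv.coe_coe, LinearEquiv.symm_apply_eq] at this
  simpa using this

variable [FiniteDimensional ℂ U] [FiniteDimensional ℂ V]

/-- The finite monoid of normalised operators. -/
def opMonoid (ρ : Representation ℂ G V) (ψ : Representation ℂ M U) (φ : M →* G)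
    (hφ : Function.Injective φ) (hn : φ.range.Normal) :
    Submonoid (Module.End ℂ (homSpace ρ ψ φ)) where
  carrier := {B | LinearMap.det B = 1 ∧ ∃ g A, SemiEq ψ φ g A ∧ OpRel ρ ψ φ g A B}
  one_mem' := by
    refine ⟨by simp, 1, LinearEquiv.refl ℂ U, ?_, ?_⟩
    · intro m m' h u
      have : m' = m := hφ (by simpa using h)
      simp [this]
    · intro f u; simp
  mul_mem' := by
    rintro B₁ B₂ ⟨d₁, g₁, A₁, s₁, r₁⟩ ⟨d₂, g₂, A₂, s₂, r₂⟩
    refine ⟨by rw [map_mul, d₁, d₂, one_mul], g₁ * g₂, A₂.trans A₁, ?_, ?_⟩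
    · intro m m' hm u
      obtain ⟨k, hk⟩ := hn.conj_mem (φ m) ⟨m, rfl⟩ g₂
      simp only [LinearEquiv.trans_apply]
      rw [s₂ m k hk, s₁ k m' (by rw [hm, hk]; group)]
    · intro f u
      simp only [LinearEquiv.trans_apply, Module.End.mul_apply]
      rw [r₁ (B₂ f) (A₂ u), r₂ f u, map_mul, Module.End.mul_apply]

theorem opMonoid_finite [Finite G] (hψ : SchurIrr ψ) (hφ : Function.Injective φ)
    (hn : φ.range.Normal) (hW : 0 < finrank ℂ (homSpace ρ ψ φ)) :
    (opMonoid ρ ψ φ hφ hn : Set (Module.End ℂ (homSpace ρ ψ φ))).Finite := by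
  have hsub : (opMonoid ρ ψ φ hφ hn : Set (Module.End ℂ (homSpace ρ ψ φ))) ⊆
      ⋃ g : G, {B | LinearMap.det B = 1 ∧ ∃ A, SemiEq ψ φ g A ∧ OpRel ρ ψ φ g A B} := by
    rintro B ⟨d, g, A, h⟩
    exact Set.mem_iUnion.mpr ⟨g, d, A, h⟩
  refine Set.Finite.subset (Set.finite_iUnion fun g => ?_) hsub
  rcases Set.eq_empty_or_nonempty
    {B | LinearMap.det B = 1 ∧ ∃ A, SemiEq ψ φ g A ∧ OpRel ρ ψ φ g A B} with h0 | ⟨B₀, d₀, A₀, s₀, r₀⟩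
  · rw [h0]; exact Set.finite_empty
  · have hfin : {c : ℂ | c ^ finrank ℂ (homSpace ρ ψ φ) = 1}.Finite := by
      have hne : (Polynomial.X ^ finrank ℂ (homSpace ρ ψ φ) - 1 : Polynomial ℂ) ≠ 0 :=
        Polynomial.X_pow_sub_C_ne_zero hW 1
      refine (Polynomial.finite_setOfPred_isRoot hne).subset ?_
      intro c hc
      simp only [Set.mem_ofPred_eq] at hc ⊢
      simp [hc]
    refine (hfin.image fun c => c • B₀).subset ?_
    rintro B ⟨d, A, s, r⟩
    obtain ⟨c, hc⟩ := SemiEq.unique hψ hn s s₀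
    have hB : B = c • B₀ := by
      ext f u
      have h1 := r f (A.symm u)
      have h2 := r₀ f (A.symm u)
      rw [hc, map_smul] at h2
      simp only [LinearEquiv.apply_symm_apply] at h1 h2
      rw [h1, ← h2]
      simp
    refine ⟨c, ?_, hB.symm⟩
    rw [hB, LinearMap.det_smul, d₀, mul_one] at d
    exact d

theorem exists_normalised (hφ : Function.Injective φ) (hn : φ.range.Normal)
    (hW : 0 < finrank ℂ (homSpace ρ ψ φ)) {g : G} (h : ∃ A, SemiEq ψ φ g A) :
    ∃ A B B', OpRel ρ ψ φ g A B ∧ OpRel ρ ψ φ g⁻¹ A.symm B' ∧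
      B ∈ opMonoid ρ ψ φ hφ hn ∧ B' ∈ opMonoid ρ ψ φ hφ hn := by
  obtain ⟨A, s⟩ := h
  obtain ⟨B, r⟩ := exists_rel (ρ := ρ) hn s
  obtain ⟨B', r'⟩ := exists_rel (ρ := ρ) hn s.symm
  have hBB : LinearMap.det B * LinearMap.det B' = 1 := by
    rw [← map_mul, r.inv r', map_one]
  obtain ⟨c, hc⟩ := IsAlgClosed.exists_pow_nat_eq (LinearMap.det B') hW
  have hc0 : c ≠ 0 := by
    rintro rfl
    rw [zero_pow hW.ne'] at hc
    rw [← hc, mul_zero] at hBB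
    exact zero_ne_one hBB
  let A₁ : U ≃ₗ[ℂ] U := (LinearEquiv.smulOfNeZero ℂ U c⁻¹ (inv_ne_zero hc0)).trans A
  have hA₁ : ∀ u, A₁ u = c⁻¹ • A u := fun u => by simp [A₁]
  have hA₁' : ∀ u, A₁.symm u = c • A.symm u := fun u => by
    rw [LinearEquiv.symm_apply_eq, hA₁]; simp [hc0]
  have s₁ : SemiEq ψ φ g A₁ := by
    intro m m' hm u
    rw [hA₁, hA₁, s m m' hm, map_smul]
  have r₁ : OpRel ρ ψ φ g A₁ (c • B) := by
    intro f u
    rw [hA₁, map_smul]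
    simp [hc0, r f u]
  have r₁' : OpRel ρ ψ φ g⁻¹ A₁.symm (c⁻¹ • B') := by
    intro f u
    rw [hA₁', map_smul]
    simp only [LinearMap.smul_apply, Submodule.coe_smul, r' f u]
    rw [smul_smul, mul_inv_cancel₀ hc0, one_smul]
  have d₁ : LinearMap.det (c • B) = 1 := by
    rw [LinearMap.det_smul, hc, mul_comm, hBB]
  have d₁' : LinearMap.det (c⁻¹ • B') = 1 := by
    have := congrArg LinearMap.det (r₁.inv r₁')
    rwa [map_mul, d₁, one_mul, map_one] at this
  exact ⟨A₁, c • B, c⁻¹ • B', r₁, r₁', ⟨d₁, g, A₁, s₁, r₁⟩, ⟨d₁', g⁻¹, A₁.symm, s₁.symm, r₁'⟩⟩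

theorem exists_dual [Fintype M] (hψ : SchurIrr ψ) (l : homSpace ρ ψ φ →ₗ[ℂ] ℂ) :
    ∃ h : V →ₗ[ℂ] U, (∀ m v, h (ρ (φ m) v) = ψ m (h v)) ∧
      ∀ (f : homSpace ρ ψ φ) u, h (f.1 u) = l f • u := by
  obtain ⟨l', hl'⟩ := LinearMap.exists_extend l
  obtain ⟨T, hT⟩ := exists_trace_form l'
  have hM : (Fintype.card M : ℂ) ≠ 0 := by exact_mod_cast Fintype.card_ne_zero
  have hd : (finrank ℂ U : ℂ) ≠ 0 := by exact_mod_cast hψ.pos.ne'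
  let h₀ : V →ₗ[ℂ] U := ∑ m, ψ m ∘ₗ T ∘ₗ ρ (φ m⁻¹)
  refine ⟨((finrank ℂ U : ℂ) / Fintype.card M) • h₀, ?_, ?_⟩
  · intro m v
    simp only [LinearMap.smul_apply, map_smul]
    congr 1
    simp only [h₀, LinearMap.sum_apply, map_sum, LinearMap.comp_apply]
    refine Fintype.sum_equiv (Equiv.mulLeft m⁻¹) _ _ ?_
    intro x
    simp only [← Module.End.mul_apply, ← map_mul, Equiv.coe_mulLeft]
    simp
  · intro f u
    have hav := average_scalar ψ hψ (T ∘ₗ f.1)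
    have hlf : LinearMap.trace ℂ U (T ∘ₗ f.1) = l f := by
      rw [hT, ← hl']; rfl
    rw [hlf] at hav
    have h1 : h₀ (f.1 u) = (∑ m, ψ m ∘ₗ (T ∘ₗ f.1) ∘ₗ ψ m⁻¹) u := by
      simp only [h₀, LinearMap.sum_apply, LinearMap.comp_apply]
      refine Finset.sum_congr rfl fun m _ => ?_
      rw [f.2 m⁻¹ u]
    rw [LinearMap.smul_apply, h1, hav, LinearMap.smul_apply, smul_smul, LinearMap.id_apply]
    congr 1
    field_simp

theorem core_dvd [Finite G] [Finite M] (hρ : SchurIrr ρ) (hψ : SchurIrr ψ)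
    (hφ : Function.Injective φ) (hn : φ.range.Normal)
    (hW : 0 < finrank ℂ (homSpace ρ ψ φ)) (N : Subgroup G)
    (hN : N ≤ φ.range ⊔ MonoidHom.ker ρ) :
    finrank ℂ V ∣ N.index * finrank ℂ U := by
  classical
  have := Fintype.ofFinite G
  have := Fintype.ofFinite M
  have := Fintype.ofFinite (G ⧸ N)
  have : Nontrivial (homSpace ρ ψ φ) := Module.finrank_pos_iff.mp hW
  have hd : (finrank ℂ U : ℂ) ≠ 0 := by exact_mod_cast hψ.pos.ne'
  have hV : (finrank ℂ V : ℂ) ≠ 0 := by exact_mod_cast hρ.pos.ne'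
  have hNc : (Nat.card N : ℂ) ≠ 0 := by exact_mod_cast Nat.card_pos.ne'
  apply dvd_of_isIntegral _ _ hρ.pos
  let q : ℂ := ((N.index * finrank ℂ U : ℕ) : ℂ) / finrank ℂ V
  let S : Finset (G ⧸ N) := Finset.univ.filter fun x => ∃ A, SemiEq ψ φ x.out A
  have key : ∀ x : G ⧸ N, ∃ t : (U ≃ₗ[ℂ] U) × Module.End ℂ (homSpace ρ ψ φ) ×
      Module.End ℂ (homSpace ρ ψ φ), x ∈ S → OpRel ρ ψ φ x.out t.1 t.2.1 ∧
      OpRel ρ ψ φ x.out⁻¹ t.1.symm t.2.2 ∧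
      t.2.1 ∈ opMonoid ρ ψ φ hφ hn ∧ t.2.2 ∈ opMonoid ρ ψ φ hφ hn := by
    intro x
    by_cases hx : x ∈ S
    · obtain ⟨A, B, B', h⟩ := exists_normalised hφ hn hW (Finset.mem_filter.mp hx).2
      exact ⟨⟨A, B, B'⟩, fun _ => h⟩
    · exact ⟨⟨LinearEquiv.refl ℂ U, 1, 1⟩, fun h => absurd h hx⟩
  choose t ht using key
  refine isIntegral_of_sum (opMonoid ρ ψ φ hφ hn) (opMonoid_finite hψ hφ hn hW) S
    (fun x => (t x).2.1) (fun x => (t x).2.2) (fun x hx => (ht x hx).2.2.1)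
    (fun x hx => (ht x hx).2.2.2) q ?_
  -- main bilinear identity
  have main : ∀ (l l' : homSpace ρ ψ φ →ₗ[ℂ] ℂ) (f f' : homSpace ρ ψ φ),
      ∑ x ∈ S, l' ((t x).2.1 f) * l ((t x).2.2 f') = q * (l f * l' f') := by
    intro l l' f f'
    obtain ⟨h, hh, hl⟩ := exists_dual hψ l
    obtain ⟨h', hh', hl'⟩ := exists_dual hψ l'
    have hc : ∀ n ∈ N, ∀ v, ρ n (f.1 (h v)) = f.1 (h (ρ n v)) := by
      let C : Subgroup G :=
        { carrier := {n | ∀ v, ρ n (f.1 (h v)) = f.1 (h (ρ n v))}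
          mul_mem' := by
            intro a b ha hb v
            simp only [Set.mem_ofPred_eq] at ha hb
            simp only [map_mul, Module.End.mul_apply, hb, ha]
          one_mem' := by intro v; simp
          inv_mem' := by
            intro a ha v
            simp only [Set.mem_ofPred_eq] at ha
            have := ha (ρ a⁻¹ v)
            simp only [← Module.End.mul_apply, ← map_mul] at this
            simp only [mul_inv_cancel, map_one, Module.End.one_apply] at this
            rw [← this]
            simp }
      have hle : N ≤ C := by
        refine hN.trans (sup_le ?_ ?_)
        · rintro _ ⟨m, rfl⟩ v
          rw [hh, f.2]
        · intro k hk v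
          have hk : ρ k = 1 := hk
          simp [hk]
      exact fun n hn => hle hn
    let F : G → U →ₗ[ℂ] U := fun g => (h' ∘ₗ ρ g ∘ₗ f.1) ∘ₗ (h ∘ₗ ρ g⁻¹ ∘ₗ f'.1)
    have hF : ∀ g, ∀ n ∈ N, F (g * n) = F g := by
      intro g n hn'
      ext u
      simp only [F, LinearMap.comp_apply, mul_inv_rev, map_mul, Module.End.mul_apply]
      rw [hc n hn']
      simp
    have hFsum : ∑ g, F g =
        ((Fintype.card G : ℂ) * (l f * finrank ℂ U) / finrank ℂ V * l' f') • LinearMap.id := by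
      have hav := average_scalar ρ hρ (f.1 ∘ₗ h)
      have htr : LinearMap.trace ℂ V (f.1 ∘ₗ h) = l f * finrank ℂ U := by
        rw [LinearMap.trace_comp_comm']
        have : h ∘ₗ f.1 = l f • LinearMap.id := by
          ext u; simp [hl]
        rw [this]; simp
      rw [htr] at hav
      ext u
      have := congrArg h' (LinearMap.congr_fun hav (f'.1 u))
      simp only [LinearMap.sum_apply, map_sum, LinearMap.smul_apply, map_smul,
        LinearMap.id_apply, hl', smul_smul] at this ⊢
      rw [← this]
      rfl
    have hFS : ∀ x ∈ S, F x.out = (l' ((t x).2.1 f) * l ((t x).2.2 f')) • LinearMap.id := by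
      intro x hx
      obtain ⟨r, r', -, -⟩ := ht x hx
      ext u
      simp only [F, LinearMap.comp_apply, LinearMap.smul_apply, LinearMap.id_apply]
      rw [← r, ← r', hl, hl', map_smul, smul_smul]
      simp
    have hFnS : ∀ x ∉ S, F x.out = 0 := by
      intro x hx
      obtain ⟨c, hc⟩ := hψ.scalar (F x.out) (by
        intro m
        obtain ⟨m', hm'⟩ := hn.conj_mem (φ m) ⟨m, rfl⟩ x.out⁻¹
        ext u
        simp only [F, LinearMap.comp_apply]
        have e1 : ρ x.out⁻¹ (ρ (φ m) (f'.1 u)) = ρ (φ m') (ρ x.out⁻¹ (f'.1 u)) := by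
          rw [← Module.End.mul_apply, ← Module.End.mul_apply, ← map_mul, ← map_mul, hm']
          congr 2
          group
        have e2 : ∀ v, ρ x.out (ρ (φ m') v) = ρ (φ m) (ρ x.out v) := by
          intro v
          rw [← Module.End.mul_apply, ← Module.End.mul_apply, ← map_mul, ← map_mul, hm']
          congr 2
          group
        rw [f'.2, e1, hh, f.2, e2, hh'])
      by_cases hc0 : c = 0
      · rw [hc, hc0, zero_smul]
      · exfalso
        apply hx
        let a : U →ₗ[ℂ] U := h' ∘ₗ ρ x.out ∘ₗ f.1
        have hsurj : Function.Surjective a := by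
          intro u
          refine ⟨(h ∘ₗ ρ x.out⁻¹ ∘ₗ f'.1) (c⁻¹ • u), ?_⟩
          have := LinearMap.congr_fun hc (c⁻¹ • u)
          simpa [hc0, F, a] using this
        have hinj : Function.Injective a := LinearMap.injective_iff_surjective.mpr hsurj
        refine Finset.mem_filter.mpr ⟨Finset.mem_univ _, LinearEquiv.ofBijective a ⟨hinj, hsurj⟩, ?_⟩
        intro m m' hm u
        change h' (ρ x.out (f.1 (ψ m u))) = ψ m' (h' (ρ x.out (f.1 u)))
        rw [f.2, ← hh', hm, ← Module.End.mul_apply, ← Module.End.mul_apply, ← map_mul, ← map_mul]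
        congr 3
        group
    rw [sum_cosets N F hF] at hFsum
    have hs : ∑ x : G ⧸ N, F x.out =
        (∑ x ∈ S, l' ((t x).2.1 f) * l ((t x).2.2 f')) • LinearMap.id := by
      rw [← Finset.sum_subset (Finset.subset_univ S) (fun x _ hx => hFnS x hx), Finset.sum_smul]
      exact Finset.sum_congr rfl hFS
    rw [hs, smul_smul] at hFsum
    have htr := congrArg (LinearMap.trace ℂ U) hFsum
    simp only [map_smul, LinearMap.trace_id, smul_eq_mul] at htr
    have htr := mul_right_cancel₀ hd htr
    have hcard : (Fintype.card G : ℂ) = Nat.card N * N.index := by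
      rw [← Nat.card_eq_fintype_card, ← N.card_mul_index]; push_cast; rfl
    rw [hcard] at htr
    apply mul_left_cancel₀ hNc
    rw [htr]
    simp only [q]
    push_cast
    field_simp
  let b := Module.finBasis ℂ (homSpace ρ ψ φ)
  apply LinearMap.ext
  intro f
  apply b.ext_elem
  intro a
  have htrace : ∀ B : Module.End ℂ (homSpace ρ ψ φ),
      LinearMap.trace ℂ _ B = ∑ j, b.coord j (B (b j)) := by
    intro B
    rw [LinearMap.trace_eq_matrix_trace ℂ b, Matrix.trace]
    refine Finset.sum_congr rfl fun j _ => ?_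
    rw [Matrix.diag_apply, LinearMap.toMatrix_apply, Basis.coord_apply]
  have h1 : ∀ j, ∑ x ∈ S, b.coord a ((t x).2.1 f) * b.coord j ((t x).2.2 (b j)) =
      q * (b.coord j f * b.coord a (b j)) := fun j => main _ _ _ _
  have h2 := Finset.sum_congr (s₁ := Finset.univ) rfl fun j _ => h1 j
  rw [Finset.sum_comm] at h2
  simp_rw [← Finset.mul_sum, ← htrace] at h2
  have h3 : ∑ j, b.coord j f * b.coord a (b j) = b.coord a f := by
    simp [Finsupp.single_apply]
  rw [h3] at h2
  rw [← Basis.coord_apply, ← Basis.coord_apply]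
  simp only [LinearMap.sum_apply, map_sum, LinearMap.smul_apply, map_smul,
    smul_eq_mul, Module.End.one_apply]
  rw [← h2]
  exact Finset.sum_congr rfl fun x _ => mul_comm _ _

end core
theorem exists_constituent {H U V : Type} [Group H] [Finite H] [AddCommGroup U] [Module ℂ U]
    [AddCommGroup V] [Module ℂ V] [FiniteDimensional ℂ V] (ρ : Representation ℂ H V)
    (f : U →ₗ[ℂ] V) (hf : f ≠ 0) :
    ∃ (X : Submodule ℂ V) (θ : Representation ℂ H X) (T : V →ₗ[ℂ] X), SchurIrr θ ∧
      (∀ h (x : X), ((θ h x : X) : V) = ρ h x) ∧ (∀ h v, T (ρ h v) = θ h (T v)) ∧ T ∘ₗ f ≠ 0 := by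
  have := Fintype.ofFinite H
  let P : Set (Submodule ℂ V) := {X | (∀ h, ∀ v ∈ X, ρ h v ∈ X) ∧ ∃ T : V →ₗ[ℂ] V,
    (∀ h v, T (ρ h v) = ρ h (T v)) ∧ (∀ v, T v ∈ X) ∧ T ∘ₗ f ≠ 0}
  have hP : P.Nonempty := ⟨⊤, by simp, LinearMap.id, by simp, by simp, by simpa using hf⟩
  obtain ⟨X, ⟨hX, T, hT, hTX, hTf⟩, hmin⟩ :=
    (wellFounded_lt : WellFounded ((· < ·) : Submodule ℂ V → Submodule ℂ V → Prop)).has_min P hP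
  let sX : Subrepresentation ρ := ⟨X, fun g v hv => hX g v hv⟩
  let θ : Representation ℂ H X := sX.toRepresentation
  have hθ : ∀ h (x : X), ((θ h x : X) : V) = ρ h x := fun h x => rfl
  have hnt : Nontrivial X := by
    by_contra hcon
    rw [not_nontrivial_iff_subsingleton] at hcon
    apply hTf
    ext u
    have : (⟨T (f u), hTX _⟩ : X) = 0 := Subsingleton.elim _ _
    simpa using congrArg Subtype.val this
  refine ⟨X, θ, T.codRestrict X hTX, ⟨Module.finrank_pos, ?_⟩, hθ, ?_, ?_⟩
  · intro k hk
    obtain ⟨c, hc⟩ := Module.End.exists_eigenvalue k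
    refine ⟨c, ?_⟩
    let Y : Submodule ℂ V := (LinearMap.ker (k - c • LinearMap.id)).map X.subtype
    have hmemY : ∀ x : X, (x : V) ∈ Y ↔ k x = c • x := by
      intro x
      simp [Y, sub_eq_zero]
    have hYX : Y ≤ X := Submodule.map_subtype_le _ _
    have hYinv : ∀ h, ∀ v ∈ Y, ρ h v ∈ Y := by
      intro h v hv
      have h1 := (hmemY ⟨v, hYX hv⟩).mp hv
      have h2 := (hmemY (θ h ⟨v, hYX hv⟩)).mpr (by
        have := LinearMap.congr_fun (hk h) ⟨v, hYX hv⟩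
        simp only [LinearMap.comp_apply] at this
        rw [this, h1, map_smul])
      exact h2
    by_cases hYeq : Y = X
    · ext x
      have := (hmemY x).mp (by rw [hYeq]; exact x.2)
      simp [this]
    · exfalso
      have hYlt : Y < X := lt_of_le_of_ne hYX hYeq
      obtain ⟨v, hv⟩ := hc.exists_hasEigenvector
      have hvY : (v : V) ∈ Y := (hmemY v).mpr hv.apply_eq_smul
      have hv0 : (v : V) ≠ 0 := by simpa using hv.2
      obtain ⟨p, hp⟩ := LinearMap.exists_leftInverse_of_injective Y.subtype (by simp)
      have hp' : ∀ y : Y, p y = y := fun y => LinearMap.congr_fun hp y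
      have hcard : (Fintype.card H : ℂ) ≠ 0 := by exact_mod_cast Fintype.card_ne_zero
      let π : V →ₗ[ℂ] V := (Fintype.card H : ℂ)⁻¹ • ∑ h, ρ h ∘ₗ (Y.subtype ∘ₗ p) ∘ₗ ρ h⁻¹
      have hπ : ∀ w, π w = (Fintype.card H : ℂ)⁻¹ • ∑ h, ρ h (p (ρ h⁻¹ w)) := by
        intro w
        simp [π, LinearMap.sum_apply]
      have hπY : ∀ w, π w ∈ Y := by
        intro w
        rw [hπ]
        exact Y.smul_mem _ (Y.sum_mem fun h _ => hYinv h _ (p _).2)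
      have hπid : ∀ w ∈ Y, π w = w := by
        intro w hw
        rw [hπ]
        have : ∀ h : H, ρ h (p (ρ h⁻¹ w)) = w := by
          intro h
          have := hp' ⟨ρ h⁻¹ w, hYinv _ _ hw⟩
          simp only at this
          rw [this]
          simp
        simp only [this, Finset.sum_const, Finset.card_univ, ← Nat.cast_smul_eq_nsmul ℂ]
        rw [smul_smul, inv_mul_cancel₀ hcard, one_smul]
      have hπeq : ∀ h w, π (ρ h w) = ρ h (π w) := by
        intro h w
        rw [hπ, hπ, map_smul, map_sum]
        congr 1
        refine Fintype.sum_equiv (Equiv.mulLeft h⁻¹) _ _ ?_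
        intro x
        simp
      have h1 : (π ∘ₗ T) ∘ₗ f = 0 := by
        by_contra hcon
        exact hmin Y ⟨hYinv, π ∘ₗ T, by intro h w; simp [hT, hπeq], fun w => hπY _, hcon⟩ hYlt
      let Z : Submodule ℂ V := X ⊓ LinearMap.ker π
      have hZlt : Z < X := by
        refine lt_of_le_of_ne inf_le_left fun hZ => hv0 ?_
        have : (v : V) ∈ Z := by rw [hZ]; exact v.2
        have h0 : π v = 0 := this.2
        rwa [hπid _ hvY] at h0
      have h2 : (T - π ∘ₗ T) ∘ₗ f = 0 := by
        by_contra hcon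
        refine hmin Z ⟨?_, T - π ∘ₗ T, by intro h w; simp [hT, hπeq], ?_, hcon⟩ hZlt
        · rintro h w ⟨hw1, hw2⟩
          refine ⟨hX h w hw1, ?_⟩
          have hw2 : π w = 0 := hw2
          change π (ρ h w) = 0
          rw [hπeq, hw2, map_zero]
        · intro w
          refine ⟨X.sub_mem (hTX w) (hYX (hπY _)), ?_⟩
          change π (T w - π (T w)) = 0
          rw [map_sub, hπid _ (hπY _), sub_self]
      apply hTf
      rw [LinearMap.sub_comp, h1, sub_zero] at h2
      exact h2
  · intro h v
    apply Subtype.ext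
    exact hT h v
  · intro h0
    apply hTf
    ext u
    exact congrArg Subtype.val (LinearMap.congr_fun h0 u)

/-- unbundled codegree -/
noncomputable def cdeg {G V : Type} [Group G] [AddCommGroup V] [Module ℂ V]
    (ρ : Representation ℂ G V) : ℕ := (MonoidHom.ker ρ).index / finrank ℂ V

theorem homSpace_pos {G M U V : Type} [Group G] [Group M] [AddCommGroup U] [Module ℂ U]
    [AddCommGroup V] [Module ℂ V] [FiniteDimensional ℂ U] [FiniteDimensional ℂ V]
    {ρ : Representation ℂ G V} {ψ : Representation ℂ M U}
    {φ : M →* G} (f : U →ₗ[ℂ] V) (hf : f ≠ 0) (h : ∀ m u, f (ψ m u) = ρ (φ m) (f u)) :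
    0 < finrank ℂ (homSpace ρ ψ φ) := by
  have : Nontrivial (homSpace ρ ψ φ) := 
    ⟨⟨⟨f, h⟩, 0, fun h0 => hf (congrArg Subtype.val h0)⟩⟩
  exact Module.finrank_pos

theorem frobenius_dvd {G V : Type} [Group G] [Finite G] [AddCommGroup V] [Module ℂ V]
    [FiniteDimensional ℂ V] {ρ : Representation ℂ G V} (hρ : SchurIrr ρ) :
    finrank ℂ V ∣ (MonoidHom.ker ρ).index := by
  have : Nontrivial V := Module.finrank_pos_iff.mp hρ.pos
  obtain ⟨v, hv⟩ := exists_ne (0 : V)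
  have h1 : SchurIrr (1 : Representation ℂ Unit ℂ) := by
    refine ⟨by simp, fun k _ => ⟨k 1, ?_⟩⟩
    ext
    simp
  have := core_dvd (φ := (1 : Unit →* G)) hρ h1 (fun _ _ _ => rfl) (by
      have : (1 : Unit →* G).range = ⊥ := by ext; simp [eq_comm]
      rw [this]; infer_instance)
    (homSpace_pos (LinearMap.toSpanSingleton ℂ V v) (by
      intro h0
      apply hv
      simpa using LinearMap.congr_fun h0 1) (by intro m u; simp))
    (MonoidHom.ker ρ) le_sup_right
  simpa using this

theorem normal_step {G M U V : Type} [Group G] [Group M] [AddCommGroup U] [Module ℂ U]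
    [AddCommGroup V] [Module ℂ V] [FiniteDimensional ℂ U] [FiniteDimensional ℂ V]
    [Finite G] [Finite M] {ρ : Representation ℂ G V} {ψ : Representation ℂ M U}
    {φ : M →* G} (hρ : SchurIrr ρ) (hψ : SchurIrr ψ)
    (hφ : Function.Injective φ) (hn : φ.range.Normal)
    (f : U →ₗ[ℂ] V) (hf : f ≠ 0) (h : ∀ m u, f (ψ m u) = ρ (φ m) (f u)) :
    cdeg ψ ∣ cdeg ρ := by
  obtain ⟨b, hb⟩ := frobenius_dvd hψ
  obtain ⟨k, hk⟩ := core_dvd hρ hψ hφ hn (homSpace_pos f hf h) _ le_rfl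
  -- the kernel of `ρ` pulled back to `M` acts trivially
  have hker : (MonoidHom.ker ρ).comap φ ≤ MonoidHom.ker ψ := by
    intro m hm
    have hm : ρ (φ m) = 1 := hm
    have := Fintype.ofFinite M
    let f' : homSpace ρ ψ φ := ⟨f, h⟩
    have hf' : f' ≠ 0 := fun h0 => hf (congrArg Subtype.val h0)
    obtain ⟨l, hl⟩ : ∃ l : Module.Dual ℂ (homSpace ρ ψ φ), l f' ≠ 0 := by
      by_contra hcon
      push Not at hcon
      exact hf' ((Module.forall_dual_apply_eq_zero_iff ℂ f').mp hcon)
    obtain ⟨r, -, hr⟩ := exists_dual hψ l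
    change ψ m = 1
    ext u
    have h1 := hr f' (ψ m u)
    have h2 := hr f' u
    have h3 : f'.1 (ψ m u) = f'.1 u := by
      change f (ψ m u) = f u
      rw [h, hm]; rfl
    rw [h3, h2] at h1
    simpa using (smul_right_injective U hl h1).symm
  obtain ⟨j, hj⟩ := Subgroup.index_dvd_of_le hker
  have hidx : ((MonoidHom.ker ρ).comap φ).index * (φ.range ⊔ MonoidHom.ker ρ).index =
      (MonoidHom.ker ρ).index := by
    rw [Subgroup.index_comap, ← Subgroup.relIndex_sup_right]
    exact Subgroup.relIndex_mul_index le_sup_right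
  have e1 : cdeg ψ = b := by
    rw [cdeg, hb, Nat.mul_div_cancel_left _ hψ.pos]
  have e2 : cdeg ρ = k * b * j := by
    rw [cdeg, ← hidx, hj, hb]
    apply Nat.div_eq_of_eq_mul_right hρ.pos
    calc _ = ((φ.range ⊔ MonoidHom.ker ρ).index * finrank ℂ U) * b * j := by ring
      _ = _ := by rw [hk]; ring
  rw [e1, e2]
  exact ⟨k * j, by ring⟩
theorem codeg_eq_cdeg {G : Type} [Group G] (V : FDRep ℂ G) : codeg V = cdeg V.ρ := by
  have : charKer V = MonoidHom.ker V.ρ := by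
    ext g
    simp only [charKer, MonoidHom.mem_ker, Units.ext_iff]
    rfl
  rw [codeg, cdeg, this]

theorem schurIrr_of_simple {G : Type} [Group G] (V : FDRep ℂ G) (hV : Simple V) :
    SchurIrr V.ρ := by
  have key : ∀ k : V →ₗ[ℂ] V, (∀ g, k ∘ₗ V.ρ g = V.ρ g ∘ₗ k) →
      ∃ c : ℂ, k = c • LinearMap.id := by
    intro k hk
    let F : V ⟶ V := ⟨InducedCategory.homMk (ModuleCat.ofHom k), fun g => by
      ext1
      exact hk g⟩
    obtain ⟨c, hc⟩ := endomorphism_simple_eq_smul_id ℂ F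
    refine ⟨c, ?_⟩
    have h2 : F.hom.hom.hom = (c • 𝟙 V : V ⟶ V).hom.hom.hom := by rw [hc]
    exact h2
  refine ⟨?_, key⟩
  by_contra hpos
  have h0 : finrank ℂ V = 0 := by omega
  have hsub : Subsingleton V := Module.finrank_zero_iff.mp h0
  apply id_nonzero V
  ext1
  ext1
  apply LinearMap.ext
  intro v
  exact Subsingleton.elim (α := V) _ _

open scoped ComplexOrder in
theorem conj_character {G V : Type} [Group G] [Finite G] [AddCommGroup V] [Module ℂ V]
    [FiniteDimensional ℂ V] (ρ : Representation ℂ G V) (g : G) :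
    starRingEnd ℂ (LinearMap.trace ℂ V (ρ g)) = LinearMap.trace ℂ V (ρ g⁻¹) := by
  classical
  have := Fintype.ofFinite G
  let b := Module.finBasis ℂ V
  let D : G → Matrix (Fin (finrank ℂ V)) (Fin (finrank ℂ V)) ℂ :=
    fun x => LinearMap.toMatrix b b (ρ x)
  have hD : ∀ x y, D (x * y) = D x * D y := by
    intro x y
    simp only [D, map_mul]
    exact LinearMap.toMatrix_mul b _ _
  have hD1 : D 1 = 1 := by
    simp only [D, map_one]
    exact LinearMap.toMatrix_one b
  let Q := ∑ x, (D x).conjTranspose * D x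
  have hQ : Q.PosDef := by
    have : Q = 1 + ∑ x ∈ Finset.univ.erase 1, (D x).conjTranspose * D x := by
      simp only [Q]
      rw [← Finset.add_sum_erase _ _ (Finset.mem_univ (1 : G)), hD1]
      simp
    rw [this]
    refine Matrix.PosDef.add_posSemidef Matrix.PosDef.one ?_
    refine Matrix.posSemidef_sum _ fun x _ => Matrix.posSemidef_conjTranspose_mul_self _
  have hu : IsUnit Q := hQ.isUnit
  have hinv : (D g).conjTranspose * Q = Q * D g⁻¹ := by
    simp only [Q]
    rw [Finset.mul_sum, Finset.sum_mul]
    refine Fintype.sum_equiv (Equiv.mulRight g) _ _ ?_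
    intro x
    simp only [Equiv.coe_mulRight, hD, Matrix.conjTranspose_mul, Matrix.mul_assoc]
    rw [← hD g, mul_inv_cancel, hD1, Matrix.mul_one]
  obtain ⟨Qu, hQu⟩ := hu
  rw [← hQu] at hinv
  have h3 : (D g).conjTranspose = Qu.1 * D g⁻¹ * (Qu⁻¹).1 := by
    rw [← hinv, mul_assoc, Units.mul_inv, mul_one]
  rw [LinearMap.trace_eq_matrix_trace ℂ b, LinearMap.trace_eq_matrix_trace ℂ b]
  change star (D g).trace = (D g⁻¹).trace
  rw [← Matrix.trace_conjTranspose, h3, Matrix.trace_mul_comm, ← mul_assoc, Units.inv_mul, one_mul]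

theorem exists_hom_of_inner {G V U : Type} [Group G] [Finite G] [AddCommGroup V] [Module ℂ V]
    [FiniteDimensional ℂ V] [AddCommGroup U] [Module ℂ U]
    [FiniteDimensional ℂ U] (ρ : Representation ℂ G V) (ψ : Representation ℂ G U)
    (h : innerChar G (fun x => LinearMap.trace ℂ V (ρ x)) (fun x => LinearMap.trace ℂ U (ψ x)) ≠ 0) :
    ∃ f : U →ₗ[ℂ] V, f ≠ 0 ∧ ∀ g u, f (ψ g u) = ρ g (f u) := by
  have := Fintype.ofFinite G
  have hc : (Nat.card G : ℂ) ≠ 0 := by exact_mod_cast Nat.card_pos.ne'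
  have := invertibleOfNonzero hc
  have h1 := Representation.card_inv_mul_sum_char_mul_char_eq_finrank ψ ρ
  by_contra hcon
  push Not at hcon
  have hs : Subsingleton (Representation.IntertwiningMap ψ ρ) := by
    refine subsingleton_of_forall_eq 0 fun f => ?_
    by_contra hf
    obtain ⟨g, u, hgu⟩ := hcon f.toLinearMap (fun h0 => hf (by
      ext u; exact LinearMap.congr_fun h0 u))
    exact hgu (LinearMap.congr_fun (f.isIntertwining' g) u)
  apply h
  rw [Module.finrank_zero_of_subsingleton, Nat.cast_zero] at h1
  rw [innerChar, finsum_eq_sum_of_fintype, div_eq_inv_mul, ← h1]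
  congr 1
  refine Finset.sum_congr rfl fun x _ => ?_
  rw [conj_character]
  rfl

theorem chain_dvd {G V : Type} [Group G] [Finite G] [AddCommGroup V] [Module ℂ V]
    [FiniteDimensional ℂ V] (ρ : Representation ℂ G V) (hρ : SchurIrr ρ) (n : ℕ)
    (c : Fin (n + 1) → Subgroup G) (hlast : c (Fin.last n) = ⊤)
    (hc : ∀ i : Fin n, c i.castSucc ≤ c i.succ ∧ ((c i.castSucc).subgroupOf (c i.succ)).Normal)
    (i : Fin (n + 1)) :
    ∀ (U : Type) [AddCommGroup U] [Module ℂ U] [FiniteDimensional ℂ U]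
      (ψ : Representation ℂ (c i) U) (_ : SchurIrr ψ) (f : U →ₗ[ℂ] V) (_ : f ≠ 0)
      (_ : ∀ (m : c i) u, f (ψ m u) = ρ m (f u)), cdeg ψ ∣ cdeg ρ := by
  induction i using Fin.reverseInduction with
  | last =>
    intro U _ _ _ ψ hψ f hf h
    refine normal_step (φ := (c (Fin.last n)).subtype) hρ hψ (Subgroup.subtype_injective _) ?_ f hf h
    rw [Subgroup.range_subtype, hlast]
    infer_instance
  | cast i ih =>
    intro U _ _ _ ψ hψ f hf h
    obtain ⟨hle, hnorm⟩ := hc i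
    obtain ⟨X, θ, T, hθ, hθρ, hT, hTf⟩ :=
      exists_constituent (ρ.comp (c i.succ).subtype) f hf
    have : Nontrivial X := Module.finrank_pos_iff.mp hθ.pos
    have h1 : cdeg θ ∣ cdeg ρ := by
      refine ih X θ hθ X.subtype ?_ ?_
      · intro h0
        obtain ⟨x, hx⟩ := exists_ne (0 : X)
        exact hx (Subtype.ext (LinearMap.congr_fun h0 x))
      · intro m u
        exact hθρ m u
    refine dvd_trans ?_ h1
    refine normal_step (φ := Subgroup.inclusion hle) hθ hψ (Subgroup.inclusion_injective hle) ?_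
      (T ∘ₗ f) hTf ?_
    · rw [Subgroup.inclusion_range]
      exact hnorm
    · intro m u
      rw [LinearMap.comp_apply, LinearMap.comp_apply, h, ← hT]
      rfl

theorem stmt_2 {G : Type} [Group G] [Finite G] (M : Subgroup G) (hM : IsSubnormal M)
    (χ : FDRep ℂ G) (hχ : Simple χ) (ψ : FDRep ℂ ↥M) (hψ : Simple ψ)
    (hcons : innerChar ↥M (fun m => χ.character ↑m) ψ.character ≠ 0) :
    codeg ψ ∣ codeg χ := by
  obtain ⟨n, c, hc0, hlast, hc⟩ := hM
  subst hc0
  rw [codeg_eq_cdeg, codeg_eq_cdeg]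
  obtain ⟨f, hf, hfe⟩ := exists_hom_of_inner (χ.ρ.comp (c 0).subtype) ψ.ρ hcons
  exact chain_dvd χ.ρ (schurIrr_of_simple χ hχ) n c hlast hc 0 ψ ψ.ρ
    (schurIrr_of_simple ψ hψ) f hf hfe
end

section
/- Let H be a maximal subgroup of a finite group G, θ ∈ Irr(H), and χ an irreducible constituent of θ^G. Then cod(χ) = cod(θ) if and only if either (1) χ = θ^G and ker(χ) = ker(θ), or (2) χ|_H = θ and G = H·ker(χ). -/
open CategoryTheory

lemma irr_of_simple {G : Type} [Group G] (V : FDRep ℂ G) (hV : Simple V) :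
    Representation.IsIrreducible (V.ρ : Representation ℂ G V) := by
  have hnt : Nontrivial V := by
    by_contra h
    rw [not_nontrivial_iff_subsingleton] at h
    apply CategoryTheory.id_nonzero V
    ext x
    exact Subsingleton.elim _ _
  refine { exists_pair_ne := ⟨⊥, ⊤, ?_⟩, eq_bot_or_eq_top := ?_ }
  · intro h
    have h2 : (⊥ : Submodule ℂ V) = ⊤ := congrArg (fun S => S.toSubmodule) h
    exact bot_ne_top h2
  · intro S
    by_cases hS : S = ⊥
    · exact Or.inl hS
    right
    let i : FDRep.of S.toRepresentation ⟶ V :=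
      ⟨InducedCategory.homMk (ModuleCat.ofHom S.toSubmodule.subtype), fun g => by
        ext x; rfl⟩
    have hmono : Mono i := by
      have : Mono ((forget (FDRep ℂ G)).map i) := by
        rw [mono_iff_injective]
        exact Subtype.val_injective
      exact (forget (FDRep ℂ G)).mono_of_mono_map this
    have hne : i ≠ 0 := by
      intro h0
      apply hS
      apply Subrepresentation.toSubmodule_injective
      rw [show (⊥ : Subrepresentation V.ρ).toSubmodule = ⊥ from rfl, Submodule.eq_bot_iff]
      intro x hx
      have : i.hom.hom.hom ⟨x, hx⟩ = (0 : FDRep.of S.toRepresentation ⟶ V).hom.hom.hom ⟨x, hx⟩ := by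
        rw [h0]
      exact this
    have hiso : IsIso i := isIso_of_mono_of_nonzero hne
    have hs : Function.Surjective ((forget (FDRep ℂ G)).map i) := by
      rw [← epi_iff_surjective]; infer_instance
    apply Subrepresentation.toSubmodule_injective
    rw [show (⊤ : Subrepresentation V.ρ).toSubmodule = ⊤ from rfl, Submodule.eq_top_iff']
    intro x
    obtain ⟨y, hy⟩ := hs x
    rw [← hy]
    exact y.2

section Aux
open Module
lemma tr_aux {V : Type*} [AddCommGroup V] [Module ℂ V] [FiniteDimensional ℂ V]
    (f g : V →ₗ[ℂ] V) (n : ℕ) (hn : n ≠ 0) (hf : f ^ n = 1) (hgf : g * f = 1) :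
    IsIntegral ℤ (LinearMap.trace ℂ V f) ∧
      LinearMap.trace ℂ V g = starRingEnd ℂ (LinearMap.trace ℂ V f) := by
  classical
  have hss : End.IsSemisimple f := by
    refine End.isSemisimple_of_squarefree_aeval_eq_zero (p := Polynomial.X ^ n - 1) ?_ ?_
    · exact (Polynomial.separable_X_pow_sub_C (1:ℂ) (by exact_mod_cast hn) one_ne_zero).squarefree
    · simp [hf]
  have hinternal := DirectSum.isInternal_submodule_of_iSupIndep_of_iSup_eq_top
    (End.eigenspaces_iSupIndep f) hss.iSup_eigenspace_eq_top
  let b := hinternal.collectedBasis (fun μ => Module.finBasis ℂ (End.eigenspace f μ))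
  have hb : ∀ i, f (b i) = i.1 • b i := fun i =>
    End.mem_eigenspace_iff.mp (hinternal.collectedBasis_mem _ i)
  have : Finite (Σ μ, Fin (finrank ℂ (End.eigenspace f μ))) := Module.Finite.finite_basis b
  have := Fintype.ofFinite (Σ μ, Fin (finrank ℂ (End.eigenspace f μ)))
  have hpow : ∀ i : (Σ μ, Fin (finrank ℂ (End.eigenspace f μ))), i.1 ^ n = 1 := by
    intro i
    have h1 : ∀ k : ℕ, (f ^ k) (b i) = i.1 ^ k • b i := by
      intro k
      induction k with
      | zero => simp
      | succ k ih => rw [pow_succ', Module.End.mul_apply, ih, map_smul, hb, smul_smul, pow_succ]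
    have h2 := h1 n
    rw [hf, Module.End.one_apply] at h2
    have h3 : (i.1 ^ n - 1) • b i = 0 := by rw [sub_smul, ← h2, one_smul, sub_self]
    rcases smul_eq_zero.mp h3 with h | h
    · exact sub_eq_zero.mp h
    · exact absurd h (b.ne_zero i)
  have hne : ∀ i : (Σ μ, Fin (finrank ℂ (End.eigenspace f μ))), i.1 ≠ 0 := by
    intro i h0
    have := hpow i
    rw [h0, zero_pow hn] at this
    exact zero_ne_one this
  have hg : ∀ i, g (b i) = (i.1)⁻¹ • b i := by
    intro i
    have h1 : g (f (b i)) = b i := by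
      rw [← Module.End.mul_apply, hgf, Module.End.one_apply]
    rw [hb, map_smul] at h1
    conv_rhs => rw [← h1]
    rw [smul_smul, inv_mul_cancel₀ (hne i), one_smul]
  have tf : LinearMap.trace ℂ V f = ∑ i : (Σ μ, Fin (finrank ℂ (End.eigenspace f μ))), i.1 := by
    rw [LinearMap.trace_eq_matrix_trace ℂ b, Matrix.trace]
    refine Finset.sum_congr rfl fun i _ => ?_
    rw [Matrix.diag_apply, LinearMap.toMatrix_apply, hb]
    simp
  have tg : LinearMap.trace ℂ V g = ∑ i : (Σ μ, Fin (finrank ℂ (End.eigenspace f μ))), (i.1)⁻¹ := by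
    rw [LinearMap.trace_eq_matrix_trace ℂ b, Matrix.trace]
    refine Finset.sum_congr rfl fun i _ => ?_
    rw [Matrix.diag_apply, LinearMap.toMatrix_apply, hg]
    simp
  constructor
  · rw [tf]
    refine IsIntegral.sum _ fun i _ => ?_
    refine ⟨Polynomial.X ^ n - 1, Polynomial.monic_X_pow_sub_C 1 hn, ?_⟩
    simp [hpow i]
  · rw [tf, tg, map_sum]
    refine Finset.sum_congr rfl fun i _ => ?_
    exact Complex.inv_eq_conj (Complex.norm_eq_one_of_pow_eq_one (hpow i) hn)

lemma char_int {G V : Type*} [Group G] [Finite G] [AddCommGroup V] [Module ℂ V]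
    [FiniteDimensional ℂ V] (ρ : Representation ℂ G V) (g : G) :
    IsIntegral ℤ (ρ.character g) ∧ ρ.character g⁻¹ = starRingEnd ℂ (ρ.character g) := by
  apply tr_aux _ _ (Nat.card G) Nat.card_pos.ne'
  · rw [← map_pow, pow_card_eq_one', map_one]
  · rw [← map_mul, inv_mul_cancel, map_one]

lemma sum_quot {G M : Type*} [Group G] [Fintype G] [AddCommMonoid M] (K : Subgroup G)
    [Fintype (G ⧸ K)]
    (F : G → M) (hF : ∀ g, ∀ k ∈ K, F (g * k) = F g) :
    ∑ g, F g = Nat.card K • ∑ q : G ⧸ K, F q.out := by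
  classical
  rw [Finset.smul_sum, ← Finset.sum_fiberwise (s := Finset.univ) (g := fun g : G => (g : G ⧸ K))]
  refine Finset.sum_congr rfl fun q _ => ?_
  have h1 : ∀ g ∈ Finset.univ.filter (fun g : G => (g : G ⧸ K) = q), F g = F q.out := by
    intro g hg
    have hg : (g : G ⧸ K) = q := by simpa using hg
    have h2 : ((q.out : G) : G ⧸ K) = (g : G ⧸ K) := by rw [hg]; exact q.out_eq
    rw [QuotientGroup.eq] at h2
    have := hF q.out _ h2
    rw [← this, mul_inv_cancel_left]
  rw [Finset.sum_congr rfl h1, Finset.sum_const]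
  congr 1
  rw [Nat.card_eq_fintype_card, Fintype.card, eq_comm]
  refine Finset.card_bij (fun k _ => q.out * (k : G)) ?_ ?_ ?_
  · intro k _
    simp only [Finset.mem_filter, Finset.mem_univ, true_and]
    rw [QuotientGroup.mk_mul_of_mem _ k.2]
    exact q.out_eq
  · intro a _ b _ h
    exact Subtype.ext (mul_left_cancel h)
  · intro g hg
    have hg : (g : G ⧸ K) = q := by simpa using hg
    have h2 : ((q.out : G) : G ⧸ K) = (g : G ⧸ K) := by rw [hg]; exact q.out_eq
    rw [QuotientGroup.eq] at h2
    exact ⟨⟨_, h2⟩, Finset.mem_univ _, by simp⟩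

lemma frob_div {G V : Type*} [Group G] [Finite G] [AddCommGroup V] [Module ℂ V]
    [FiniteDimensional ℂ V] (ρ : Representation ℂ G V) (hρ : ρ.IsIrreducible)
    (K : Subgroup G) (hK : ∀ k ∈ K, ρ k = 1) : finrank ℂ V ∣ K.index := by
  classical
  have := Fintype.ofFinite G
  have : Invertible (Nat.card G : ℂ) := invertibleOfNonzero (by
    exact_mod_cast Nat.card_pos.ne')
  have hnt : Nontrivial V := by
    by_contra h
    rw [not_nontrivial_iff_subsingleton] at h
    apply bot_ne_top (α := Subrepresentation ρ)
    apply Subrepresentation.toSubmodule_injective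
    exact Subsingleton.elim _ _
  have hd : (finrank ℂ V : ℂ) ≠ 0 := by exact_mod_cast (Module.finrank_pos).ne'
  let F : G → (V →ₗ[ℂ] V) := fun g => ρ.character g⁻¹ • ρ g
  -- the scalar
  let T : Representation.IntertwiningMap ρ ρ := ⟨∑ g, F g, fun x => by
    have : (∑ g, F g) * ρ x = ρ x * (∑ g, F g) := by
      rw [Finset.sum_mul, Finset.mul_sum]
      refine Fintype.sum_equiv (MulAut.conj x⁻¹).toEquiv _ _ fun g => ?_
      simp only [F, MulEquiv.toEquiv_eq_coe, EquivLike.coe_coe, MulAut.conj_apply,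
        smul_mul_assoc, mul_smul_comm, ← map_mul]
      congr 1
      · rw [mul_inv_rev, mul_inv_rev, ← mul_assoc, inv_inv x, Representation.char_mul_comm, mul_inv_cancel_left]
      · congr 1; group
    exact this⟩
  obtain ⟨c, hc⟩ := (Representation.IsIrreducible.algebraMap_intertwiningMap_bijective_of_isAlgClosed
    (ρ := ρ)).2 T
  have hc' : ∑ g, F g = c • (1 : V →ₗ[ℂ] V) := by
    have := congrArg (fun t : Representation.IntertwiningMap ρ ρ => t.toLinearMap) hc
    rw [show ∑ g, F g = T.toLinearMap from rfl, ← this]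
    ext v
    simp [Algebra.algebraMap_eq_smul_one]
  have hcd : c * finrank ℂ V = Nat.card G := by
    have h1 := congrArg (LinearMap.trace ℂ V) hc'
    rw [map_smul, LinearMap.trace_one, map_sum, smul_eq_mul] at h1
    rw [← h1]
    have h2 := Representation.char_orthonormal ρ ρ
    rw [if_pos ⟨Representation.Equiv.refl ρ⟩] at h2
    have h3 : (Nat.card G : ℂ) ≠ 0 := by exact_mod_cast Nat.card_pos.ne'
    rw [inv_mul_eq_one₀ h3] at h2
    rw [h2]
    refine Finset.sum_congr rfl fun g _ => ?_
    simp only [F, map_smul, smul_eq_mul, Representation.character]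
    ring
  have := Fintype.ofFinite (G ⧸ K)
  have hq := sum_quot K F (by
    intro g k hk
    simp only [F, map_mul, hK k hk, mul_one, mul_inv_rev, Representation.character]
    rw [hK _ (K.inv_mem hk), one_mul])
  let A := integralClosure ℤ ℂ
  let φ : MonoidAlgebra A G →ₐ[A] (V →ₗ[ℂ] V) := MonoidAlgebra.lift A (V →ₗ[ℂ] V) G ρ
  let e : MonoidAlgebra A G := ∑ q : G ⧸ K,
    MonoidAlgebra.single (q.out) (⟨ρ.character q.out⁻¹, (char_int ρ _).1⟩ : A)
  have hφ : φ e = ∑ q : G ⧸ K, F q.out := by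
    simp only [e, map_sum]
    refine Finset.sum_congr rfl fun q _ => ?_
    simp only [φ, MonoidAlgebra.lift_single, F]
    rfl
  have hKc : (Nat.card K : ℂ) ≠ 0 := by exact_mod_cast Nat.card_pos.ne'
  have hval : φ e = algebraMap ℂ _ (c / Nat.card K) := by
    rw [hφ, Algebra.algebraMap_eq_smul_one, div_eq_inv_mul, ← smul_smul, ← hc', hq,
      ← Nat.cast_smul_eq_nsmul ℂ, smul_smul, inv_mul_cancel₀ hKc, one_smul]
  have he : IsIntegral A e := Algebra.IsIntegral.isIntegral e
  have he2 : IsIntegral A (algebraMap ℂ (V →ₗ[ℂ] V) (c / Nat.card K)) := by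
    rw [← hval]; exact he.map φ
  have he3 : IsIntegral A (c / Nat.card K) :=
    (isIntegral_algebraMap_iff (FaithfulSMul.algebraMap_injective ℂ (V →ₗ[ℂ] V))).mp he2
  have he4 : IsIntegral ℤ (c / Nat.card K) := isIntegral_trans _ he3
  have hidx : c / Nat.card K = (K.index : ℂ) / finrank ℂ V := by
    have := K.card_mul_index
    rw [div_eq_div_iff hKc hd, hcd, ← this]; push_cast; ring
  rw [hidx] at he4
  have he5 : IsIntegral ℤ ((K.index : ℚ) / finrank ℂ V) := by
    rw [← isIntegral_algebraMap_iff (FaithfulSMul.algebraMap_injective ℚ ℂ)]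
    simpa using he4
  obtain ⟨y, hy⟩ := IsIntegrallyClosed.isIntegral_iff.mp he5
  have hd' : (finrank ℂ V : ℚ) ≠ 0 := by exact_mod_cast hd
  rw [eq_div_iff hd', eq_intCast] at hy
  have : y * (finrank ℂ V : ℤ) = K.index := by exact_mod_cast hy
  exact Int.natCast_dvd_natCast.mp ⟨y, by rw [← this]; ring⟩

lemma nontriv_of_irr {G V : Type*} [Group G] [AddCommGroup V] [Module ℂ V]
    (ρ : Representation ℂ G V) (hρ : ρ.IsIrreducible) : Nontrivial V := by
  by_contra h
  rw [not_nontrivial_iff_subsingleton] at h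
  apply bot_ne_top (α := Subrepresentation ρ)
  apply Subrepresentation.toSubmodule_injective
  exact Subsingleton.elim _ _

lemma sub_top_of_irr {G V : Type*} [Group G] [AddCommGroup V] [Module ℂ V]
    (ρ : Representation ℂ G V) (hρ : ρ.IsIrreducible) (S : Submodule ℂ V)
    (hS : ∀ g, ∀ v ∈ S, ρ g v ∈ S) : S = ⊥ ∨ S = ⊤ := by
  rcases hρ.eq_bot_or_eq_top ⟨S, fun g v hv => hS g v hv⟩ with h | h
  · left; exact congrArg (fun S => S.toSubmodule) h
  · right; exact congrArg (fun S => S.toSubmodule) h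

open scoped Classical in
/-- Degree bound and character of the induced representation when the bound is attained. -/
lemma ind_bound {G V W : Type*} [Group G] [Finite G] [AddCommGroup V] [Module ℂ V]
    [FiniteDimensional ℂ V] [AddCommGroup W] [Module ℂ W] [FiniteDimensional ℂ W]
    (H : Subgroup G) [Fintype (G ⧸ H)]
    (ρ : Representation ℂ G V) (hρ : ρ.IsIrreducible) (σ : Representation ℂ H W)
    (f : W →ₗ[ℂ] V) (hf0 : f ≠ 0) (hf : ∀ (h : H) w, f (σ h w) = ρ h (f w)) :
    finrank ℂ V ≤ H.index * finrank ℂ W ∧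
    (finrank ℂ V = H.index * finrank ℂ W → ∀ g, ρ.character g =
      ∑ q : G ⧸ H, if h : (q.out)⁻¹ * g * q.out ∈ H then
        σ.character ⟨(q.out)⁻¹ * g * q.out, h⟩ else 0) := by
  let Φ : (G ⧸ H → W) →ₗ[ℂ] V :=
    ∑ q : G ⧸ H, (ρ q.out ∘ₗ f) ∘ₗ LinearMap.proj q
  have hΦ : ∀ v, Φ v = ∑ q : G ⧸ H, ρ q.out (f (v q)) := by
    intro v; simp [Φ, LinearMap.sum_apply]
  have hsingle : ∀ q w, Φ (Pi.single q w) = ρ q.out (f w) := by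
    intro q w
    rw [hΦ, Finset.sum_eq_single q]
    · simp
    · intro b _ hb
      simp [Pi.single_eq_of_ne hb]
    · simp
  -- action of an arbitrary element
  have hact : ∀ (y : G) (w : W), ∃ w', ρ y (f w) = Φ (Pi.single (y : G ⧸ H) w') := by
    intro y w
    have h2 : (((y : G ⧸ H).out : G) : G ⧸ H) = (y : G ⧸ H) := Quotient.out_eq _
    rw [QuotientGroup.eq] at h2
    refine ⟨σ ⟨_, h2⟩ w, ?_⟩
    rw [hsingle, hf]
    simp only [← Module.End.mul_apply, ← map_mul]
    rw [mul_inv_cancel_left]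
  have hrange : LinearMap.range Φ = ⊤ := by
    refine (sub_top_of_irr ρ hρ (LinearMap.range Φ) ?_).resolve_left ?_
    · rintro g _ ⟨v, rfl⟩
      rw [hΦ, map_sum]
      refine Submodule.sum_mem _ fun q _ => ?_
      rw [← Module.End.mul_apply, ← map_mul]
      obtain ⟨w', hw'⟩ := hact (g * q.out) (v q)
      rw [hw']
      exact ⟨_, rfl⟩
    · intro hbot
      apply hf0
      ext w
      obtain ⟨w', hw'⟩ := hact 1 w
      rw [map_one, Module.End.one_apply] at hw'
      rw [hw']
      have : Φ (Pi.single ((1 : G) : G ⧸ H) w') ∈ LinearMap.range Φ := ⟨_, rfl⟩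
      rw [hbot] at this
      exact this
  have hdim : finrank ℂ (G ⧸ H → W) = H.index * finrank ℂ W := by
    rw [Module.finrank_pi_fintype]
    simp [Subgroup.index_eq_card]
  have hsurj : Function.Surjective Φ := LinearMap.range_eq_top.mp hrange
  constructor
  · rw [← hdim]; exact LinearMap.finrank_le_finrank_of_surjective hsurj
  · intro heq g
    have hinj : Function.Injective Φ :=
      (LinearMap.injective_iff_surjective_of_finrank_eq_finrank (by rw [hdim, heq])).mpr hsurj
    let E : (G ⧸ H → W) ≃ₗ[ℂ] V := LinearEquiv.ofBijective Φ ⟨hinj, hsurj⟩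
    have hE : ∀ v, E v = Φ v := fun v => rfl
    let P : G ⧸ H → (V →ₗ[ℂ] W) := fun q => LinearMap.proj q ∘ₗ E.symm.toLinearMap
    have hid : ρ g = ∑ q : G ⧸ H, (ρ g ∘ₗ (ρ q.out ∘ₗ f)) ∘ₗ P q := by
      ext v
      obtain ⟨u, rfl⟩ := E.surjective v
      simp only [P, LinearMap.sum_apply, LinearMap.comp_apply, LinearEquiv.coe_coe,
        LinearEquiv.symm_apply_apply, LinearMap.proj_apply]
      rw [hE, hΦ, map_sum]
    have hchar : ρ.character g = LinearMap.trace ℂ V (ρ g) := rfl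
    rw [hchar, hid, map_sum]
    refine Finset.sum_congr rfl fun q _ => ?_
    rw [LinearMap.trace_comp_comm']
    split_ifs with h
    · have : P q ∘ₗ ρ g ∘ₗ ρ q.out ∘ₗ f = σ ⟨_, h⟩ := by
        ext w
        simp only [P, LinearMap.comp_apply, LinearEquiv.coe_coe, LinearMap.proj_apply]
        have h3 : ρ g (ρ q.out (f w)) = E (Pi.single q (σ ⟨_, h⟩ w)) := by
          rw [hE, hsingle, hf]
          simp only [← Module.End.mul_apply, ← map_mul]
          congr 2; group
        rw [h3, LinearEquiv.symm_apply_apply, Pi.single_eq_same]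
      rw [this]; rfl
    · have : P q ∘ₗ ρ g ∘ₗ ρ q.out ∘ₗ f = 0 := by
        ext w
        simp only [P, LinearMap.comp_apply, LinearEquiv.coe_coe, LinearMap.proj_apply]
        obtain ⟨w', hw'⟩ := hact (g * q.out) w
        rw [map_mul, Module.End.mul_apply] at hw'
        rw [hw', ← hE, LinearEquiv.symm_apply_apply, Pi.single_eq_of_ne, LinearMap.zero_apply]
        intro hq
        apply h
        have h2 : ((q.out : G) : G ⧸ H) = ((g * q.out : G) : G ⧸ H) := by
          rw [← hq]; exact q.out_eq
        rw [QuotientGroup.eq] at h2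
        rwa [mul_assoc]
      rw [this, map_zero]

lemma exists_intertwiner {G V W : Type*} [Group G] [Finite G] [AddCommGroup V] [Module ℂ V]
    [FiniteDimensional ℂ V] [AddCommGroup W] [Module ℂ W] [FiniteDimensional ℂ W]
    (ρ : Representation ℂ G V) (σ : Representation ℂ G W) [Fintype G]
    (h : ∑ g, σ.character g * ρ.character g⁻¹ ≠ 0) :
    ∃ f : W →ₗ[ℂ] V, f ≠ 0 ∧ ∀ g w, f (σ g w) = ρ g (f w) := by
  have : Invertible (Nat.card G : ℂ) := invertibleOfNonzero (by
    exact_mod_cast Nat.card_pos.ne')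
  have h1 := Representation.card_inv_mul_sum_char_mul_char_eq_finrank σ ρ
  have h2 : ∑ g, ρ.character g * σ.character g⁻¹ = ∑ g, σ.character g * ρ.character g⁻¹ := by
    refine Fintype.sum_equiv (Equiv.inv G) _ _ fun g => ?_
    simp [mul_comm]
  rw [h2] at h1
  have h3 : finrank ℂ (Representation.IntertwiningMap σ ρ) ≠ 0 := by
    intro h0
    rw [h0, Nat.cast_zero, mul_eq_zero] at h1
    rcases h1 with h1 | h1
    · exact (inv_ne_zero (by exact_mod_cast Nat.card_pos.ne')) h1
    · exact h h1
  have : Nontrivial (Representation.IntertwiningMap σ ρ) := by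
    by_contra hn
    rw [not_nontrivial_iff_subsingleton] at hn
    exact h3 Module.finrank_zero_of_subsingleton
  obtain ⟨f, hf⟩ := exists_ne (0 : Representation.IntertwiningMap σ ρ)
  refine ⟨f.toLinearMap, ?_, fun g w => ?_⟩
  · intro h0
    apply hf
    ext w
    exact congrArg (fun t : W →ₗ[ℂ] V => t w) h0
  · exact congrArg (fun t : W →ₗ[ℂ] V => t w) (f.isIntertwining' g)

end Aux

open scoped Classical in
lemma indChar_quot {G : Type} [Group G] [Finite G] (H : Subgroup G) [Fintype (G ⧸ H)]
    (θ : FDRep ℂ ↥H) (g : G) :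
    indChar H θ g = ∑ q : G ⧸ H, if h : (q.out)⁻¹ * g * q.out ∈ H then
        θ.character ⟨(q.out)⁻¹ * g * q.out, h⟩ else 0 := by
  have := Fintype.ofFinite G
  have hH : (Nat.card H : ℂ) ≠ 0 := by exact_mod_cast Nat.card_pos.ne'
  let F : G → ℂ := fun x => if h : x⁻¹ * g * x ∈ H then θ.character ⟨x⁻¹ * g * x, h⟩ else 0
  have h1 := sum_quot H F (by
    intro x k hk
    have hiff : (x * k)⁻¹ * g * (x * k) = k⁻¹ * (x⁻¹ * g * x) * k := by group
    by_cases hx : x⁻¹ * g * x ∈ H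
    · have hx2 : (x * k)⁻¹ * g * (x * k) ∈ H := by
        rw [hiff]; exact H.mul_mem (H.mul_mem (H.inv_mem hk) hx) hk
      simp only [F, dif_pos hx, dif_pos hx2]
      rw [← FDRep.char_conj θ ⟨x⁻¹ * g * x, hx⟩ (⟨k, hk⟩ : H)⁻¹]
      congr 1
      apply Subtype.ext
      simp only [hiff, Subgroup.coe_mul, Subgroup.coe_inv, inv_inv]
    · have hx2 : (x * k)⁻¹ * g * (x * k) ∉ H := by
        intro h
        apply hx
        rw [hiff] at h
        have := H.mul_mem (H.mul_mem hk h) (H.inv_mem hk)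
        convert this using 1
        group
      simp only [F, dif_neg hx, dif_neg hx2])
  change _ = ∑ q : G ⧸ H, F q.out
  unfold indChar
  rw [div_eq_iff hH, finsum_eq_sum_of_fintype, mul_comm, ← nsmul_eq_mul, ← h1]
  refine Fintype.sum_equiv (Equiv.inv G) _ _ fun x => ?_
  simp [F]

lemma inner_recip {G : Type} [Group G] [Finite G] (H : Subgroup G) [Fintype H]
    (θ : FDRep ℂ ↥H) (χ : FDRep ℂ G)
    (hcons : innerChar G (indChar H θ) χ.character ≠ 0) :
    ∑ h : H, θ.character h * χ.character (h : G)⁻¹ ≠ 0 := by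
  classical
  have := Fintype.ofFinite G
  intro h0
  apply hcons
  unfold innerChar
  rw [finsum_eq_sum_of_fintype]
  have hconj : ∀ g, starRingEnd ℂ (χ.character g) = χ.character g⁻¹ := fun g =>
    ((char_int χ.ρ g).2).symm
  have key : ∀ x : G, ∑ g : G, (if h : x * g * x⁻¹ ∈ H then θ.character ⟨x * g * x⁻¹, h⟩ else 0) *
      χ.character g⁻¹ = 0 := by
    intro x
    have h1 : ∑ g : G, (if h : x * g * x⁻¹ ∈ H then θ.character ⟨x * g * x⁻¹, h⟩ else 0) *
      χ.character g⁻¹ = ∑ g : G, (if h : g ∈ H then θ.character ⟨g, h⟩ else 0) *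
      χ.character g⁻¹ := by
      refine Fintype.sum_equiv (MulAut.conj x).toEquiv _ _ fun g => ?_
      simp only [MulEquiv.toEquiv_eq_coe, EquivLike.coe_coe, MulAut.conj_apply]
      congr 1
      rw [← FDRep.char_conj χ g⁻¹ x]
      congr 1; group
    refine Eq.trans ?_ h0
    rw [h1, ← Finset.sum_filter_add_sum_filter_not Finset.univ (fun g => g ∈ H)]
    rw [Finset.sum_eq_zero (s := Finset.univ.filter (fun g => g ∉ H)), add_zero]
    · rw [Finset.sum_subtype (p := fun g => g ∈ H) (F := ‹Fintype H›) _ (by simp)]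
      refine Finset.sum_congr (by ext; simp) fun h _ => ?_
      rw [dif_pos h.2]
    · intro g hg
      have hg : g ∉ H := by simpa using hg
      rw [dif_neg hg, zero_mul]
  have h2 : ∑ g : G, indChar H θ g * starRingEnd ℂ (χ.character g) = 0 := by
    unfold indChar
    simp only [finsum_eq_sum_of_fintype, hconj, div_mul_eq_mul_div, Finset.sum_mul]
    rw [← Finset.sum_div, Finset.sum_comm, Finset.sum_eq_zero fun x _ => key x, zero_div]
  rw [h2, zero_div]

lemma mem_charKer {G : Type} [Group G] (V : FDRep ℂ G) (g : G) :
    g ∈ charKer V ↔ V.ρ g = 1 := by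
  unfold charKer
  rw [MonoidHom.mem_ker, ← Units.val_inj, Representation.asGroupHom_apply, Units.val_one]

theorem stmt_4 {G : Type} [Group G] [Finite G] (H : Subgroup G) (hmax : IsCoatom H)
    (θ : FDRep ℂ ↥H) (hθ : Simple θ) (χ : FDRep ℂ G) (hχ : Simple χ)
    (hcons : innerChar G (indChar H θ) χ.character ≠ 0) :
    codeg χ = codeg θ ↔
      (χ.character = indChar H θ ∧ charKer χ = (charKer θ).map H.subtype) ∨
      ((∀ x : ↥H, χ.character ↑x = θ.character x) ∧
        ∀ g : G, ∃ h k : G, h ∈ H ∧ k ∈ charKer χ ∧ g = h * k) := by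
  classical
  have := Fintype.ofFinite G
  have := Fintype.ofFinite H
  have := Fintype.ofFinite (G ⧸ H)
  have iθ := irr_of_simple θ hθ
  have iχ := irr_of_simple χ hχ
  have ntθ := nontriv_of_irr _ iθ
  have ntχ := nontriv_of_irr _ iχ
  obtain ⟨f, hf0, hf⟩ := exists_intertwiner
    (MonoidHom.comp (χ.ρ) H.subtype : Representation ℂ H χ) θ.ρ (inner_recip H θ χ hcons)
  replace hf : ∀ (h : H) w, f (θ.ρ h w) = χ.ρ h (f w) := hf
  have hinj : Function.Injective f := by
    rw [← LinearMap.ker_eq_bot]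
    refine (sub_top_of_irr _ iθ (LinearMap.ker f) ?_).resolve_right ?_
    · intro h w hw
      rw [LinearMap.mem_ker] at hw ⊢
      rw [hf, hw, map_zero]
    · intro h; exact hf0 (LinearMap.ker_eq_top.mp h)
  have hsub : (charKer χ).subgroupOf H ≤ charKer θ := by
    intro h hh
    rw [Subgroup.mem_subgroupOf, mem_charKer] at hh
    rw [mem_charKer]
    ext w
    apply hinj
    rw [hf, hh]; rfl
  obtain ⟨hle, hind⟩ := ind_bound H χ.ρ iχ θ.ρ f hf0 hf
  have hb : 0 < Module.finrank ℂ θ := Module.finrank_pos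
  have ha : 0 < Module.finrank ℂ χ := Module.finrank_pos
  have hn : 0 < H.index := Nat.pos_of_ne_zero Subgroup.index_ne_zero_of_finite
  by_cases hKH : charKer χ ≤ H
  · have hno2 : ¬ ((∀ x : ↥H, χ.character ↑x = θ.character x) ∧
        ∀ g : G, ∃ h k : G, h ∈ H ∧ k ∈ charKer χ ∧ g = h * k) := by
      rintro ⟨-, h⟩
      apply hmax.1
      rw [Subgroup.eq_top_iff']
      intro g
      obtain ⟨h, k, hh, hk, rfl⟩ := h g
      exact H.mul_mem hh (hKH hk)
    rw [or_iff_left hno2]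
    have i1 : (charKer χ).index = ((charKer χ).subgroupOf H).index * H.index :=
      (Subgroup.relIndex_mul_index hKH).symm
    have i2 : ((charKer χ).subgroupOf H).index =
      ((charKer χ).subgroupOf H).relIndex (charKer θ) * (charKer θ).index :=
      (Subgroup.relIndex_mul_index hsub).symm
    constructor
    · intro hcod
      obtain ⟨s, hs⟩ := frob_div χ.ρ iχ (charKer χ) fun k hk => (mem_charKer χ k).mp hk
      obtain ⟨t, ht⟩ := frob_div θ.ρ iθ (charKer θ) fun k hk => (mem_charKer θ k).mp hk
      unfold codeg at hcod
      rw [hs, ht, Nat.mul_div_cancel_left _ ha, Nat.mul_div_cancel_left _ hb] at hcod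
      subst hcod
      have hs0 : 0 < s := by
        rcases Nat.eq_zero_or_pos s with h | h
        · rw [h, mul_zero] at hs
          exact absurd hs Subgroup.index_ne_zero_of_finite
        · exact h
      set m := ((charKer χ).subgroupOf H).relIndex (charKer θ) with hm
      have hm0 : m ≠ 0 := by
        intro h
        rw [h, zero_mul] at i2
        exact Subgroup.index_ne_zero_of_finite i2
      have e1 : Module.finrank ℂ χ * s = (m * (H.index * Module.finrank ℂ θ)) * s := by
        rw [← hs, i1, i2, ht]; ring
      have e2 := Nat.eq_of_mul_eq_mul_right hs0 e1
      have hpos : 0 < H.index * Module.finrank ℂ θ := Nat.mul_pos hn hb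
      have hm1 : m = 1 := by
        have : m * (H.index * Module.finrank ℂ θ) ≤ 1 * (H.index * Module.finrank ℂ θ) := by
          rw [← e2, one_mul]; exact hle
        have := Nat.le_of_mul_le_mul_right this hpos
        omega
      rw [hm1, one_mul] at e2
      constructor
      · funext g
        rw [indChar_quot]
        exact hind e2 g
      · have h1 : charKer θ ≤ (charKer χ).subgroupOf H := Subgroup.relIndex_eq_one.mp hm1
        rw [← le_antisymm hsub h1, Subgroup.map_subgroupOf_eq_of_le hKH]
    · rintro ⟨hc, hk⟩
      have e2 : Module.finrank ℂ χ = H.index * Module.finrank ℂ θ := by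
        have h1 := congrFun hc 1
        rw [indChar_quot, FDRep.char_one] at h1
        have h2 : ∀ q : G ⧸ H, (if h : (q.out)⁻¹ * 1 * q.out ∈ H then
            θ.character ⟨(q.out)⁻¹ * 1 * q.out, h⟩ else 0) = (Module.finrank ℂ θ : ℂ) := by
          intro q
          have h3 : (q.out)⁻¹ * 1 * q.out = (1 : G) := by group
          have h4 : (q.out)⁻¹ * 1 * q.out ∈ H := by rw [h3]; exact H.one_mem
          rw [dif_pos h4, ← FDRep.char_one]
          congr 1
          exact Subtype.ext h3
        rw [Finset.sum_congr rfl fun q _ => h2 q, Finset.sum_const, Finset.card_univ,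
          ← Nat.card_eq_fintype_card, nsmul_eq_mul] at h1
        exact_mod_cast h1
      have hk2 : (charKer χ).subgroupOf H = charKer θ := by
        rw [hk, ← Subgroup.comap_subtype]
        exact Subgroup.comap_map_eq_self_of_injective H.subtype_injective _
      unfold codeg
      rw [i1, hk2, e2, mul_comm, Nat.mul_div_mul_left _ _ hn]
  · have hnorm : (charKer χ).Normal := by unfold charKer; infer_instance
    have hsup : H ⊔ charKer χ = ⊤ := hmax.2 _ (by
      rw [lt_iff_le_and_ne]
      exact ⟨le_sup_left, fun h => hKH (by rw [h]; exact le_sup_right)⟩)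
    have hprod : ∀ g : G, ∃ h k : G, h ∈ H ∧ k ∈ charKer χ ∧ g = h * k := by
      intro g
      have : g ∈ H ⊔ charKer χ := by rw [hsup]; trivial
      rw [Subgroup.mem_sup_of_normal_right] at this
      obtain ⟨h, hh, k, hk, e⟩ := this
      exact ⟨h, k, hh, hk, e.symm⟩
    have hrange : LinearMap.range f = ⊤ := by
      refine (sub_top_of_irr _ iχ (LinearMap.range f) ?_).resolve_left ?_
      · rintro g _ ⟨w, rfl⟩
        obtain ⟨h, k, hh, hk, e⟩ := hprod g⁻¹
        have e' : g = k⁻¹ * h⁻¹ := by rw [← mul_inv_rev, ← e, inv_inv]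
        have e'' : g = h⁻¹ * (h * k⁻¹ * h⁻¹) := by rw [e']; group
        have hk' : h * k⁻¹ * h⁻¹ ∈ charKer χ := hnorm.conj_mem _ (inv_mem hk) h
        rw [e'', map_mul, (mem_charKer χ _).mp hk', mul_one]
        exact ⟨θ.ρ (⟨h, hh⟩ : H)⁻¹ w, hf _ w⟩
      · intro h; exact hf0 (LinearMap.range_eq_bot.mp h)
    let E : θ ≃ₗ[ℂ] χ := LinearEquiv.ofBijective f ⟨hinj, LinearMap.range_eq_top.mp hrange⟩
    have hE : ∀ w, E w = f w := fun _ => rfl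
    have hchar : ∀ x : ↥H, χ.character ↑x = θ.character x := by
      intro x
      have : χ.ρ x = E.conj (θ.ρ x) := by
        ext v
        obtain ⟨w, rfl⟩ := E.surjective v
        rw [LinearEquiv.conj_apply_apply, LinearEquiv.symm_apply_apply, hE, hE, hf]
      unfold FDRep.character
      rw [this]
      exact LinearMap.trace_conj' _ _
    refine iff_of_true ?_ (Or.inr ⟨hchar, hprod⟩)
    have hker : (charKer χ).subgroupOf H = charKer θ := by
      apply le_antisymm hsub
      intro h hh
      rw [mem_charKer] at hh
      rw [Subgroup.mem_subgroupOf, mem_charKer]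
      ext v
      obtain ⟨w, rfl⟩ := E.surjective v
      rw [hE, ← hf, hh]; rfl
    have hidx : (charKer θ).index = (charKer χ).index := by
      rw [← hker, ← (charKer χ).relIndex_top_right, ← hsup, Subgroup.relIndex_sup_right]
      rfl
    unfold codeg
    rw [hidx, E.finrank_eq]
end

section
/- Let χ be an irreducible character of a finite group G whose kernel ker(χ) is not nilpotent. Then there exists an irreducible character ξ of G such that ker(ξ) is strictly contained in ker(χ) and cod(ξ) > cod(χ). -/
open CategoryTheory

theorem simple_invariant {G : Type} [Group G] [Finite G] (V : FDRep ℂ G) [Simple V]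
    (p : Submodule ℂ V) (hp : ∀ g, ∀ v ∈ p, V.ρ g v ∈ p) : p = ⊥ ∨ p = ⊤ := by
  let s : Subrepresentation V.ρ := ⟨p, fun g v hv => hp g v hv⟩
  let W : FDRep ℂ G := FDRep.of s.toRepresentation
  let f : W ⟶ V := ⟨FGModuleCat.ofHom p.subtype, fun g => by ext x; rfl⟩
  have hinj : Function.Injective f := fun a b h => Subtype.ext h
  have : Mono f := ConcreteCategory.mono_of_injective f hinj
  by_cases h : f = 0
  · left
    rw [eq_bot_iff]
    intro v hv
    have : f.hom.hom.hom ⟨v, hv⟩ = (0 : V) := by rw [h]; rfl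
    exact this
  · right
    have hi : IsIso f := isIso_of_mono_of_nonzero h
    rw [eq_top_iff]
    intro v _
    have h2 : inv f ≫ f = 𝟙 V := by simp
    have h3 := congrArg (fun t : V ⟶ V => t.hom.hom.hom v) h2
    have h4 : f.hom.hom.hom ((inv f).hom.hom.hom v) = v := h3
    rw [← h4]
    exact Subtype.property (p := fun x => x ∈ p) _

theorem simple_nontrivial {G : Type} [Group G] [Finite G] (V : FDRep ℂ G) [Simple V] :
    Nontrivial V := by
  by_contra h
  rw [not_nontrivial_iff_subsingleton] at h
  apply id_nonzero V
  ext x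
  exact Subsingleton.elim (α := V) _ _

theorem simple_of_irr {G V : Type} [Group G] [Finite G] [AddCommGroup V] [Module ℂ V]
    [FiniteDimensional ℂ V] (ρ : Representation ℂ G V) (h : ρ.IsIrreducible) :
    Simple (FDRep.of ρ) := by
  have := Fintype.ofFinite G
  have : Invertible (Nat.card G : ℂ) := invertibleOfNonzero (NeZero.ne (Nat.card G : ℂ))
  rw [FDRep.simple_iff_char_is_norm_one]
  have h1 := ρ.card_inv_mul_sum_char_mul_char_eq_finrank ρ
  rw [Representation.IsIrreducible.finrank_intertwiningMap_self] at h1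
  have h0 : (Nat.card G : ℂ) ≠ 0 := NeZero.ne _
  field_simp at h1
  rw [Nat.cast_one, mul_one] at h1
  exact h1

open Representation in
theorem char_integral {G V : Type} [Group G] [Finite G] [AddCommGroup V] [Module ℂ V]
    [FiniteDimensional ℂ V] (ρ : Representation ℂ G V) (g : G) : IsIntegral ℤ (ρ.character g) := by
  classical
  let b := Module.finBasis ℂ V
  unfold Representation.character
  rw [LinearMap.trace_eq_matrix_trace ℂ b, Matrix.trace_eq_sum_roots_charpoly]
  apply IsIntegral.multiset_sum
  intro x hx
  have hx' : x ∈ (ρ g).charpoly.roots := by rwa [← LinearMap.charpoly_toMatrix _ b]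
  have hev : Module.End.HasEigenvalue (ρ g) x := by
    rw [Module.End.hasEigenvalue_iff_isRoot_charpoly]
    exact Polynomial.isRoot_of_mem_roots hx'
  obtain ⟨v, hv⟩ := hev.exists_hasEigenvector
  have := hv.pow_apply (Nat.card G)
  rw [← map_pow, pow_card_eq_one', map_one] at this
  have h1 : (x ^ Nat.card G - 1) • v = 0 := by
    rw [sub_smul, ← this]; simp
  rcases smul_eq_zero.1 h1 with h | h
  · refine IsIntegral.of_pow (Nat.card_pos (α := G)) ?_
    rw [sub_eq_zero.1 h]; exact isIntegral_one
  · exact absurd h hv.2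

open Representation in
theorem degree_dvd {G V : Type} [Group G] [Finite G] [AddCommGroup V] [Module ℂ V]
    [FiniteDimensional ℂ V] (ρ : Representation ℂ G V) (h : ρ.IsIrreducible) :
    Module.finrank ℂ V ∣ Nat.card G := by
  classical
  have := Fintype.ofFinite G
  have : Invertible (Nat.card G : ℂ) := invertibleOfNonzero (NeZero.ne (Nat.card G : ℂ))
  have h1 := ρ.card_inv_mul_sum_char_mul_char_eq_finrank ρ
  rw [Representation.IsIrreducible.finrank_intertwiningMap_self] at h1
  have h0 : (Nat.card G : ℂ) ≠ 0 := NeZero.ne _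
  field_simp at h1
  rw [Nat.cast_one, mul_one] at h1
  let E : V →ₗ[ℂ] V := ∑ g : G, ρ.character g⁻¹ • ρ g
  have hE : ∀ x, E ∘ₗ ρ x = ρ x ∘ₗ E := by
    intro x
    change E * ρ x = ρ x * E
    simp only [E, Finset.sum_mul, Finset.mul_sum, smul_mul_assoc, mul_smul_comm, ← map_mul]
    refine Fintype.sum_equiv (MulAut.conj x⁻¹).toEquiv _ _ fun g => ?_
    simp [mul_assoc]
    congr 1
    have := ρ.char_conj g⁻¹ x⁻¹
    simpa [mul_assoc] using this.symm
  let F : IntertwiningMap ρ ρ := ⟨E, hE⟩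
  obtain ⟨c, hc⟩ := (Representation.IsIrreducible.algebraMap_intertwiningMap_bijective_of_isAlgClosed (ρ := ρ)).2 F
  have hEc : E = algebraMap ℂ (Module.End ℂ V) c := by
    have : (algebraMap ℂ (IntertwiningMap ρ ρ) c).toLinearMap = E := by rw [hc]
    rw [← this]; ext v; rfl
  have htr : c * Module.finrank ℂ V = Nat.card G := by
    have h2 : LinearMap.trace ℂ V E = Nat.card G := by
      simp only [E, map_sum, map_smul, smul_eq_mul]
      rw [← h1]
      exact Finset.sum_congr rfl fun g _ => mul_comm _ _
    rw [hEc, Algebra.algebraMap_eq_smul_one] at h2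
    simpa using h2
  let O := integralClosure ℤ ℂ
  let φ : MonoidAlgebra O G →ₐ[O] Module.End ℂ V := MonoidAlgebra.lift O (Module.End ℂ V) G ρ
  let e : MonoidAlgebra O G := ∑ g : G, MonoidAlgebra.single g ⟨ρ.character g⁻¹, char_integral ρ _⟩
  have hφ : φ e = E := by
    simp only [φ, e, map_sum, MonoidAlgebra.lift_single, E]
    rfl
  have : Module.Finite O (MonoidAlgebra O G) := inferInstance
  have hint : IsIntegral O (φ e) := (Algebra.IsIntegral.isIntegral e).map φ
  have : Nontrivial V := by
    by_contra hn
    rw [not_nontrivial_iff_subsingleton] at hn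
    have : (⊥ : Subrepresentation ρ) = ⊤ := by
      apply SetLike.ext; intro v
      have : v = 0 := Subsingleton.elim _ _
      subst this
      exact ⟨fun _ => Submodule.zero_mem _, fun _ => Submodule.zero_mem _⟩
    exact bot_ne_top this
  have hc' : IsIntegral O c := by
    rw [hφ, hEc] at hint
    exact (isIntegral_algebraMap_iff (FaithfulSMul.algebraMap_injective ℂ (Module.End ℂ V))).1 hint
  have hcZ : IsIntegral ℤ c := isIntegral_trans (A := O) c hc'
  have hd : (Module.finrank ℂ V : ℂ) ≠ 0 := by
    exact_mod_cast (Module.finrank_pos (R := ℂ) (M := V)).ne'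
  have hq : c = algebraMap ℚ ℂ ((Nat.card G : ℚ) / Module.finrank ℂ V) := by
    simp only [map_div₀, map_natCast]; field_simp; exact htr
  rw [hq, isIntegral_algebraMap_iff (algebraMap ℚ ℂ).injective] at hcZ
  obtain ⟨n, hn⟩ := IsIntegrallyClosed.isIntegral_iff.1 hcZ
  have hd' : (Module.finrank ℂ V : ℚ) ≠ 0 := by exact_mod_cast hd
  rw [eq_div_iff hd'] at hn
  simp at hn
  have : (Module.finrank ℂ V : ℤ) ∣ (Nat.card G : ℤ) := ⟨n, by rw [mul_comm]; simp; exact_mod_cast hn.symm⟩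
  exact_mod_cast this

theorem irr_of_forall {G V : Type} [Group G] [AddCommGroup V] [Module ℂ V] [Nontrivial V]
    (ρ : Representation ℂ G V)
    (h : ∀ p : Submodule ℂ V, (∀ g, ∀ v ∈ p, ρ g v ∈ p) → p = ⊥ ∨ p = ⊤) : ρ.IsIrreducible := by
  have : Nontrivial (Subrepresentation ρ) := ⟨⊥, ⊤, fun hh =>
    bot_ne_top (α := Submodule ℂ V) (congrArg Subrepresentation.toSubmodule hh)⟩
  refine ⟨fun s => ?_⟩
  rcases h s.toSubmodule (fun g v hv => s.apply_mem_toSubmodule g hv) with h | h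
  · left; exact Subrepresentation.toSubmodule_injective h
  · right; exact Subrepresentation.toSubmodule_injective h

theorem irr_nontrivial {G V : Type} [Group G] [AddCommGroup V] [Module ℂ V]
    (ρ : Representation ℂ G V) (h : ρ.IsIrreducible) : Nontrivial V := by
  by_contra hn
  rw [not_nontrivial_iff_subsingleton] at hn
  have : (⊥ : Subrepresentation ρ) = ⊤ := by
    apply SetLike.ext; intro v
    have : v = 0 := Subsingleton.elim _ _
    subst this
    exact ⟨fun _ => Submodule.zero_mem _, fun _ => Submodule.zero_mem _⟩
  exact bot_ne_top this

theorem irr_forall {G V : Type} [Group G] [AddCommGroup V] [Module ℂ V]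
    (ρ : Representation ℂ G V) (h : ρ.IsIrreducible)
    (p : Submodule ℂ V) (hp : ∀ g, ∀ v ∈ p, ρ g v ∈ p) : p = ⊥ ∨ p = ⊤ := by
  let s : Subrepresentation ρ := ⟨p, fun g v hv => hp g v hv⟩
  rcases h.eq_bot_or_eq_top s with h | h
  · left; exact congrArg Subrepresentation.toSubmodule h
  · right; exact congrArg Subrepresentation.toSubmodule h

theorem mem_kerhom {G V : Type} [Group G] [AddCommGroup V] [Module ℂ V]
    (ρ : Representation ℂ G V) (g : G) : g ∈ (Representation.asGroupHom ρ).ker ↔ ρ g = 1 := by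
  rw [MonoidHom.mem_ker, ← Representation.asGroupHom_apply, Units.val_eq_one]

theorem degree_dvd_index {G V : Type} [Group G] [Finite G] [AddCommGroup V] [Module ℂ V]
    [FiniteDimensional ℂ V] (ρ : Representation ℂ G V) (h : ρ.IsIrreducible) :
    Module.finrank ℂ V ∣ (Representation.asGroupHom ρ).ker.index := by
  have := irr_nontrivial ρ h
  let σ : Representation ℂ (G ⧸ (Representation.asGroupHom ρ).ker) V :=
    QuotientGroup.lift _ ρ fun g hg => (mem_kerhom ρ g).1 hg
  have hσ : σ.IsIrreducible := irr_of_forall σ fun p hp =>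
    irr_forall ρ h p fun g v hv => hp (QuotientGroup.mk g) v hv
  exact degree_dvd σ hσ

theorem exists_irr_sub {G W : Type} [Group G] [AddCommGroup W] [Module ℂ W]
    [FiniteDimensional ℂ W] (τ : Representation ℂ G W) (W₀ : Submodule ℂ W) (h0 : W₀ ≠ ⊥)
    (hinv : ∀ g, ∀ v ∈ W₀, τ g v ∈ W₀) :
    ∃ s : Subrepresentation τ, s.toSubmodule ≤ W₀ ∧ s.toRepresentation.IsIrreducible := by
  let T : Set (Submodule ℂ W) := {p | p ≠ ⊥ ∧ p ≤ W₀ ∧ ∀ g, ∀ v ∈ p, τ g v ∈ p}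
  obtain ⟨p, ⟨hp0, hpW, hpi⟩, hmin⟩ :=
    (wellFounded_lt (α := Submodule ℂ W)).has_min T ⟨W₀, h0, le_rfl, hinv⟩
  let s : Subrepresentation τ := ⟨p, fun g v hv => hpi g v hv⟩
  refine ⟨s, hpW, ?_⟩
  have : Nontrivial s.toSubmodule := Submodule.nontrivial_iff_ne_bot.2 hp0
  refine irr_of_forall _ fun q hq => ?_
  by_cases hq0 : q = ⊥
  · left; exact hq0
  right
  have hle : q.map p.subtype ≤ p := Submodule.map_subtype_le _ _
  have hT : q.map p.subtype ∈ T := by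
    refine ⟨?_, hle.trans hpW, ?_⟩
    · rwa [Ne, ← Submodule.map_bot p.subtype, (Submodule.map_injective_of_injective p.injective_subtype).eq_iff]
    · rintro g _ ⟨v, hv, rfl⟩
      exact ⟨_, hq g v hv, rfl⟩
  have := hmin _ hT
  have heq : q.map p.subtype = p := by
    by_contra hne
    exact this (lt_of_le_of_ne hle hne)
  rw [eq_top_iff]
  rintro ⟨v, hv⟩ -
  have hv' : v ∈ q.map p.subtype := by rw [heq]; exact hv
  obtain ⟨w, hw, rfl⟩ := hv'
  exact hw

/-- The representation on `V`-valued functions on `G ⧸ M`. -/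
noncomputable def cosetRep {G V : Type} [Group G] [AddCommGroup V] [Module ℂ V]
    (ρ : Representation ℂ G V) (M : Subgroup G) : Representation ℂ G (G ⧸ M → V) where
  toFun g :=
    { toFun := fun f x => ρ g (f (g⁻¹ • x))
      map_add' := fun f f' => by ext x; simp
      map_smul' := fun c f => by ext x; simp }
  map_one' := by ext; simp
  map_mul' g h := by
    apply LinearMap.ext; intro f; ext x
    simp [mul_smul]

theorem cosetRep_apply {G V : Type} [Group G] [AddCommGroup V] [Module ℂ V]
    (ρ : Representation ℂ G V) (M : Subgroup G) (g : G) (f : G ⧸ M → V) (x : G ⧸ M) :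
    cosetRep ρ M g f x = ρ g (f (g⁻¹ • x)) := rfl

theorem main_aux {G V : Type} [Group G] [Finite G] [AddCommGroup V] [Module ℂ V]
    [FiniteDimensional ℂ V] (ρ : Representation ℂ G V) (h : ρ.IsIrreducible) (M : Subgroup G)
    (hM : IsCoatom M) (hMK : M ⊔ (Representation.asGroupHom ρ).ker = ⊤) :
    ∃ s : Subrepresentation (cosetRep ρ M), s.toRepresentation.IsIrreducible ∧
      Module.finrank ℂ s.toSubmodule + Module.finrank ℂ V ≤ M.index * Module.finrank ℂ V ∧
      ¬ (Representation.asGroupHom ρ).ker ≤ (Representation.asGroupHom s.toRepresentation).ker ∧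
      (Representation.asGroupHom s.toRepresentation).ker ⊓ M ≤ (Representation.asGroupHom ρ).ker ∧
      (¬ (Representation.asGroupHom s.toRepresentation).ker ≤ M →
        (Representation.asGroupHom ρ).ker ⊓ M ≤
          (Representation.asGroupHom s.toRepresentation).ker) := by
  classical
  have := irr_nontrivial ρ h
  have := Fintype.ofFinite (G ⧸ M)
  set K := (Representation.asGroupHom ρ).ker with hK
  let sm : (G ⧸ M → V) →ₗ[ℂ] V := ∑ x, LinearMap.proj x
  have hsm : ∀ f, sm f = ∑ x, f x := fun f => by simp [sm]
  have hsurj : Function.Surjective sm := fun v =>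
    ⟨Pi.single (QuotientGroup.mk 1) v, by simp [hsm]⟩
  have hdim : Module.finrank ℂ (LinearMap.ker sm) + Module.finrank ℂ V
      = M.index * Module.finrank ℂ V := by
    have h1 := LinearMap.finrank_range_add_finrank_ker sm
    rw [LinearMap.range_eq_top.2 hsurj, finrank_top, Module.finrank_pi_fintype] at h1
    simp only [Finset.sum_const, Finset.card_univ, smul_eq_mul] at h1
    rw [Subgroup.index, Nat.card_eq_fintype_card, ← h1, add_comm]
  have hm : 1 < M.index := Subgroup.one_lt_index_of_ne_top hM.1
  have hd : 0 < Module.finrank ℂ V := Module.finrank_pos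
  have h0 : LinearMap.ker sm ≠ ⊥ := by
    intro hb
    rw [hb, finrank_bot] at hdim
    nlinarith
  have hinv : ∀ g, ∀ f ∈ LinearMap.ker sm, cosetRep ρ M g f ∈ LinearMap.ker sm := by
    intro g f hf
    rw [LinearMap.mem_ker, hsm] at hf ⊢
    simp only [cosetRep_apply]
    have h1 : ∑ x, f (g⁻¹ • x) = ∑ x, f x := Equiv.sum_comp (MulAction.toPerm g⁻¹) f
    rw [← map_sum, h1, hf, map_zero]
  obtain ⟨s, hs, hirr⟩ := exists_irr_sub (cosetRep ρ M) _ h0 hinv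
  refine ⟨s, hirr, ?_, ?_⟩
  · rw [← hdim]
    exact Nat.add_le_add_right (Submodule.finrank_mono hs) _
  set X := (Representation.asGroupHom s.toRepresentation).ker with hX
  have hXmem : ∀ g, g ∈ X ↔ ∀ f ∈ s.toSubmodule, cosetRep ρ M g f = f := by
    intro g
    rw [hX, mem_kerhom]
    constructor
    · intro hg f hf
      exact congrArg Subtype.val (LinearMap.congr_fun hg ⟨f, hf⟩)
    · intro hg
      apply LinearMap.ext
      rintro ⟨f, hf⟩
      exact Subtype.ext (hg f hf)
  have hKmem : ∀ g, g ∈ K ↔ ρ g = 1 := mem_kerhom ρ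
  have hsne := irr_nontrivial _ hirr
  obtain ⟨⟨f₀, hf₀⟩, hne⟩ := exists_ne (0 : s.toSubmodule)
  have hf₀0 : f₀ ≠ 0 := fun hh => hne (Subtype.ext hh)
  -- transitivity of a normal supplement
  have htrans : ∀ N : Subgroup G, N.Normal → M ⊔ N = ⊤ → ∀ x : G ⧸ M, ∃ n ∈ N,
      x = n • (QuotientGroup.mk 1 : G ⧸ M) := by
    intro N hN hMN x
    obtain ⟨g, rfl⟩ := QuotientGroup.mk_surjective x
    have hg : g ∈ N ⊔ M := by rw [sup_comm, hMN]; trivial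
    rw [Subgroup.mem_sup_of_normal_left] at hg
    obtain ⟨n, hn, m, hm, rfl⟩ := hg
    refine ⟨n, hn, ?_⟩
    change _ = QuotientGroup.mk (n * 1)
    rw [QuotientGroup.eq]
    simpa using hm
  have hfix : ∀ m ∈ M, m⁻¹ • (QuotientGroup.mk 1 : G ⧸ M) = QuotientGroup.mk 1 := by
    intro m hm
    change QuotientGroup.mk (m⁻¹ * 1) = _
    rw [QuotientGroup.eq]
    simpa using hm
  refine ⟨?_, ?_, ?_⟩
  · intro hKX
    apply hf₀0
    have hconst : ∀ x, f₀ x = f₀ (QuotientGroup.mk 1) := by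
      intro x
      obtain ⟨k, hk, rfl⟩ := htrans K inferInstance hMK x
      have h1 := congrFun ((hXmem k).1 (hKX hk) f₀ hf₀) (k • QuotientGroup.mk 1)
      rw [cosetRep_apply, (hKmem k).1 hk, inv_smul_smul] at h1
      exact h1.symm
    have h2 : sm f₀ = 0 := hs hf₀
    rw [hsm, Finset.sum_congr rfl (fun x _ => hconst x), Finset.sum_const, Finset.card_univ,
      ← Nat.cast_smul_eq_nsmul ℂ, smul_eq_zero] at h2
    ext x
    rw [hconst x]
    exact h2.resolve_left (Nat.cast_ne_zero.2 Fintype.card_ne_zero)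
  · rintro x ⟨hx, hxM⟩
    let q : Submodule ℂ V := s.toSubmodule.map (LinearMap.proj (QuotientGroup.mk 1))
    have hq : ∀ g, ∀ v ∈ q, ρ g v ∈ q := by
      rintro g _ ⟨f, hf, rfl⟩
      have hg : g ∈ M ⊔ K := by rw [hMK]; trivial
      rw [Subgroup.mem_sup_of_normal_right] at hg
      obtain ⟨m, hm, k, hk, rfl⟩ := hg
      refine ⟨cosetRep ρ M m f, s.apply_mem_toSubmodule m hf, ?_⟩
      rw [map_mul, (hKmem k).1 hk, mul_one]
      simp only [LinearMap.proj_apply, cosetRep_apply, hfix m hm]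
    rw [hKmem]
    rcases irr_forall ρ h q hq with hb | ht
    · exfalso
      apply hf₀0
      ext y
      obtain ⟨g, rfl⟩ := QuotientGroup.mk_surjective y
      have h1 : cosetRep ρ M g⁻¹ f₀ (QuotientGroup.mk 1) ∈ q :=
        ⟨_, s.apply_mem_toSubmodule g⁻¹ hf₀, rfl⟩
      rw [hb, Submodule.mem_bot, cosetRep_apply] at h1
      have h2 := congrArg (ρ g) h1
      rw [← Module.End.mul_apply, ← map_mul] at h2
      simpa using h2
    · apply LinearMap.ext
      intro v
      have hv : v ∈ q := by rw [ht]; trivial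
      obtain ⟨f, hf, rfl⟩ := hv
      have h1 := congrFun ((hXmem x).1 hx f hf) (QuotientGroup.mk 1)
      rw [cosetRep_apply, hfix x hxM] at h1
      exact h1
  · intro hXM
    have hMX : M ⊔ X = ⊤ := hM.2 _ (lt_of_le_of_ne le_sup_left fun hh => hXM (by
      rw [hh]; exact le_sup_right))
    rintro k ⟨hk, hkM⟩
    rw [hXmem]
    intro f hf
    have key : ∀ f ∈ s.toSubmodule, f (QuotientGroup.mk 1) = 0 → f = 0 := by
      intro f hf hf1
      ext y
      obtain ⟨x, hx, rfl⟩ := htrans X inferInstance hMX y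
      have h1 := congrFun ((hXmem x).1 hx f hf) (x • QuotientGroup.mk 1)
      rw [cosetRep_apply, inv_smul_smul, hf1, map_zero] at h1
      exact h1.symm
    rw [← sub_eq_zero]
    apply key _ (s.toSubmodule.sub_mem (s.apply_mem_toSubmodule k hf) hf)
    rw [Pi.sub_apply, cosetRep_apply, hfix k hkM, (hKmem k).1 hk]
    simp

theorem arith_aux {a m d e I : ℕ} (hd : 0 < d) (he : 0 < e) (hI0 : 0 < I) (hI : a * m ≤ I)
    (hdvd : e ∣ I) (hed : e + d ≤ m * d) : a / d < I / e := by
  obtain ⟨t, rfl⟩ := hdvd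
  rw [Nat.mul_div_cancel_left _ he]
  by_contra! hlt
  rw [Nat.le_div_iff_mul_le hd] at hlt
  have ht : 0 < t := Nat.pos_of_mul_pos_left hI0
  have h1 : t * (e + d) ≤ t * (m * d) := Nat.mul_le_mul_left _ hed
  have h2 : t * d * m ≤ a * m := Nat.mul_le_mul_right _ hlt
  have h3 : 0 < t * d := Nat.mul_pos ht hd
  nlinarith

theorem exists_max {G : Type} [Group G] [Finite G] (K : Subgroup G) [K.Normal]
    (hK : ¬ Group.IsNilpotent K) : ∃ M : Subgroup G, IsCoatom M ∧ M ⊔ K = ⊤ ∧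
      ∀ X : Subgroup G, X.Normal → K ⊓ M ≤ X → K ≤ X := by
  have h1 : ¬ ∀ (p : ℕ) (_hp : Fact p.Prime) (P : Sylow p K), (↑P : Subgroup K).Normal :=
    fun h => hK ((Group.isNilpotent_of_finite_tfae.out 0 3 rfl rfl).2 h)
  push Not at h1
  obtain ⟨p, hp, P, hP⟩ := h1
  have hN : Subgroup.normalizer ((P : Subgroup K).map K.subtype : Set G) ⊔ K = ⊤ :=
    Sylow.normalizer_sup_eq_top P
  have hle : ∀ k : K, k ∈ Subgroup.normalizer (P : Set K) ↔
      (k : G) ∈ Subgroup.normalizer ((P : Subgroup K).map K.subtype : Set G) := by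
    intro k
    have hmem : ∀ x : K, (x : G) ∈ ((P : Subgroup K).map K.subtype) ↔ x ∈ (P : Subgroup K) := by
      intro x
      constructor
      · rintro ⟨y, hy, hyx⟩
        rwa [← Subtype.ext hyx]
      · exact fun hx => ⟨x, hx, rfl⟩
    rw [← Sylow.coe_coe, Subgroup.mem_normalizer_iff, Subgroup.mem_normalizer_iff]
    constructor
    · intro hk x
      by_cases hx : x ∈ K
      · have := hk ⟨x, hx⟩
        rw [← hmem, ← hmem] at this
        exact this
      · constructor
        · rintro ⟨y, hy, rfl⟩
          exact absurd y.2 hx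
        · rintro ⟨y, hy, hyx⟩
          exfalso
          apply hx
          have h2 : x = (k : G)⁻¹ * y * k := by
            change (y : G) = _ at hyx
            rw [hyx]; group
          rw [h2]
          exact K.mul_mem (K.mul_mem (K.inv_mem k.2) y.2) k.2
    · intro hk x
      rw [← hmem, ← hmem]
      exact hk x
  have hne : Subgroup.normalizer ((P : Subgroup K).map K.subtype : Set G) ≠ ⊤ := by
    intro ht
    apply hP
    rw [← Subgroup.normalizer_eq_top_iff, eq_top_iff]
    intro k _
    rw [Sylow.coe_coe, hle, ht]; trivial
  obtain ⟨M, hM, hNM⟩ := (eq_top_or_exists_le_coatom _).resolve_left hne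
  refine ⟨M, hM, ?_, ?_⟩
  · rw [eq_top_iff, ← hN]; exact sup_le_sup_right hNM _
  · intro X hX hXM
    have hn : Subgroup.normalizer (P : Set K) ≤ X.subgroupOf K := fun k hk =>
      hXM ⟨k.2, hNM ((hle k).1 hk)⟩
    have h2 := Sylow.normalizer_sup_eq_top' (N := X.subgroupOf K) P
      (Subgroup.le_normalizer.trans hn)
    rw [sup_of_le_right hn] at h2
    exact Subgroup.subgroupOf_eq_top.1 h2

theorem stmt_8 {G : Type} [Group G] [Finite G] (χ : FDRep ℂ G) (hχ : Simple χ)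
    (hK : ¬ Group.IsNilpotent ↥(charKer χ)) :
    ∃ ξ : FDRep ℂ G, Simple ξ ∧ charKer ξ < charKer χ ∧ codeg χ < codeg ξ := by
  have hirr : Representation.IsIrreducible χ.ρ := by
    have := simple_nontrivial χ
    exact irr_of_forall _ (simple_invariant χ)
  have : (charKer χ).Normal := MonoidHom.normal_ker _
  obtain ⟨M, hM, hMK, hX⟩ := exists_max (charKer χ) hK
  obtain ⟨s, hs, hdim, hnot, hle, himp⟩ := main_aux χ.ρ hirr M hM hMK
  let ξ : FDRep ℂ G := FDRep.of s.toRepresentation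
  have hXdef : charKer ξ = (Representation.asGroupHom s.toRepresentation).ker := rfl
  have hXM : charKer ξ ≤ M := by
    by_contra hh
    exact hnot (hX _ (MonoidHom.normal_ker _) (himp hh))
  have hXK : charKer ξ ≤ charKer χ := fun x hx => hle ⟨hx, hXM hx⟩
  refine ⟨ξ, simple_of_irr _ hs, lt_of_le_not_ge hXK hnot, ?_⟩
  have hVn := irr_nontrivial _ hirr
  have hSn := irr_nontrivial _ hs
  have hind : (charKer χ).index * M.index ≤ (charKer ξ).index := by
    have h1 : (charKer χ ⊓ M).index = (charKer χ).index * M.index := by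
      rw [← Subgroup.relIndex_mul_index (inf_le_right : charKer χ ⊓ M ≤ M),
        Subgroup.inf_relIndex_right, ← Subgroup.relIndex_sup_right, hMK,
        Subgroup.relIndex_top_right]
    rw [← h1]
    exact Subgroup.index_antitone (le_inf hXK hXM)
  exact arith_aux (Module.finrank_pos (R := ℂ) (M := χ)) (Module.finrank_pos (R := ℂ) (M := s.toSubmodule))
    (Nat.pos_of_ne_zero Subgroup.FiniteIndex.index_ne_zero) hind (degree_dvd_index _ hs) hdim
end

section
/- Let G be a nontrivial finite solvable group. Then the Fitting height of G is at most |cod(G)| − 1, where cod(G) is the set of all codegrees of irreducible characters of G. -/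
open CategoryTheory

/-- `M/N` is nilpotent: some term of the lower central series of `M` (relative to `M`)
lands in `N`. -/
def nilpotentFactor {G : Type} [Group G] (N M : Subgroup G) : Prop :=
  ∃ m : ℕ, (fun K => ⁅K, M⁆)^[m] M ≤ N

/-- The Fitting height: the length of the shortest normal series with nilpotent factors. -/
noncomputable def fittingHeight (G : Type) [Group G] : ℕ :=
  sInf {n | ∃ c : Fin (n + 1) → Subgroup G, c 0 = ⊥ ∧ c (Fin.last n) = ⊤ ∧
    (∀ i, (c i).Normal) ∧ (∀ i : Fin n, c i.castSucc ≤ c i.succ) ∧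
    ∀ i : Fin n, nilpotentFactor (c i.castSucc) (c i.succ)}

theorem nilpotentFactor_iff {G : Type} [Group G] (N M : Subgroup G) :
    nilpotentFactor N M ↔ ∃ m, M.lowerCentralSeries m ≤ N := by
  have h : ∀ m, (fun K => ⁅K, M⁆)^[m] M = M.lowerCentralSeries m := by
    intro m
    induction m with
    | zero => rfl
    | succ n ih => rw [Function.iterate_succ_apply', ih]; rfl
  simp only [nilpotentFactor, h]

theorem nilpotent_of_le_frattini {G : Type} [Group G] [Finite G] (M K : Subgroup G)
    [M.Normal] [K.Normal] (hMK : M ≤ K) (hM : M ≤ frattini G)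
    (h : Group.IsNilpotent (K.map (QuotientGroup.mk' M))) : Group.IsNilpotent K := by
  have q := (Group.isNilpotent_of_finite_tfae (G := K)).out 0 3
  rw [q]; clear q
  intro p hp P
  set π := QuotientGroup.mk' M with hπ
  have hsurj : Function.Surjective π := QuotientGroup.mk'_surjective M
  let P0 : Subgroup G := P.1.map K.subtype
  have hP0K : P0 ≤ K := Subgroup.map_subtype_le _
  let L : Subgroup G := P0 ⊔ M
  have hLK : L ≤ K := sup_le hP0K hMK
  let f : K →* K.map π := π.subgroupMap K
  have hf : Function.Surjective f := π.subgroupMap_surjective K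
  let Pb : Sylow p (K.map π) := P.mapSurjective hf
  have hPbn : (Pb : Subgroup (K.map π)).Normal :=
    (Group.isNilpotent_of_finite_tfae.out 0 3 rfl rfl).mp h p hp Pb
  have hPbc : (Pb : Subgroup (K.map π)).Characteristic := Pb.characteristic_of_normal hPbn
  have hKn : (K.map π).Normal := Subgroup.Normal.map inferInstance π hsurj
  have hn1 : ((Pb : Subgroup (K.map π)).map (K.map π).subtype).Normal :=
    ConjAct.normal_of_characteristic_of_normal
  have e1 : (Pb : Subgroup (K.map π)).map (K.map π).subtype = P0.map π := by
    change (P.1.map f).map _ = (P.1.map K.subtype).map π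
    rw [Subgroup.map_map, Subgroup.map_map]
    rfl
  have e2 : L = (P0.map π).comap π := by
    rw [Subgroup.comap_map_eq, QuotientGroup.ker_mk']
  have hLn : L.Normal := by
    rw [e2, ← e1]
    exact Subgroup.Normal.comap hn1 π
  have hpg : IsPGroup p (P0.subgroupOf L) := by
    have : IsPGroup p P0 := P.2.map K.subtype
    exact this.comap_subtype
  have hidx : ¬ p ∣ (P0.subgroupOf L).index := by
    intro hd
    have h1 : P0.relIndex L * L.relIndex K = P0.relIndex K :=
      Subgroup.relIndex_mul_relIndex _ _ _ le_sup_left hLK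
    have h2 : P0.relIndex K = P.1.index := by
      have : P0.subgroupOf K = P.1 := Subgroup.comap_map_eq_self_of_injective K.subtype_injective _
      rw [Subgroup.relIndex, this]
    apply P.not_dvd_index
    change p ∣ P.1.index
    rw [← h2, ← h1]
    exact Dvd.dvd.mul_right hd _
  let Q : Sylow p L := hpg.toSylow hidx
  have hQ : (Q : Subgroup L).map L.subtype = P0 := by
    change (P0.subgroupOf L).map L.subtype = P0
    exact Subgroup.map_subgroupOf_eq_of_le le_sup_left
  have hfr := Sylow.normalizer_sup_eq_top Q
  rw [hQ] at hfr
  have hfr2 : Subgroup.normalizer (P0 : Set G) ⊔ frattini G = ⊤ := by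
    rw [eq_top_iff, ← hfr]
    refine sup_le le_sup_left (sup_le (Subgroup.le_normalizer.trans le_sup_left)
      (hM.trans le_sup_right))
  have hPn : P0.Normal := Subgroup.normalizer_eq_top_iff.mp (frattini_nongenerating hfr2)
  exact hPn.of_map_subtype

theorem nilpotentFactor_map {G : Type} [Group G] (N K : Subgroup G) [N.Normal] :
    nilpotentFactor N K ↔ Group.IsNilpotent (K.map (QuotientGroup.mk' N)) := by
  rw [nilpotentFactor_iff, Subgroup.isNilpotent_iff_lowerCentralSeries]
  simp only [← Subgroup.map_lowerCentralSeries, Subgroup.map_eq_bot_iff, QuotientGroup.ker_mk']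

/-- relative Frattini lemma -/
theorem nilpotentFactor_frattini {G : Type} [Group G] [Finite G] (N M K : Subgroup G)
    [N.Normal] [M.Normal] [K.Normal] (hNM : N ≤ M) (hMK : M ≤ K)
    (hM : ∀ H : Subgroup G, IsCoatom H → N ≤ H → M ≤ H)
    (h : nilpotentFactor M K) : nilpotentFactor N K := by
  rw [nilpotentFactor_map]
  have hs : Function.Surjective (QuotientGroup.mk' N) := QuotientGroup.mk'_surjective N
  have : (M.map (QuotientGroup.mk' N)).Normal := Subgroup.Normal.map inferInstance _ hs
  have : (K.map (QuotientGroup.mk' N)).Normal := Subgroup.Normal.map inferInstance _ hs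
  apply nilpotent_of_le_frattini (M.map (QuotientGroup.mk' N))
  · exact Subgroup.map_mono hMK
  · simp only [frattini, Order.radical, le_iInf_iff]
    intro H hH
    rw [Subgroup.map_le_iff_le_comap]
    apply hM _ (Subgroup.isCoatom_comap_of_surjective hs hH)
    conv_lhs => rw [← QuotientGroup.ker_mk' N]
    exact Subgroup.ker_le_comap _ _
  · rw [← nilpotentFactor_map, nilpotentFactor_iff]
    rw [nilpotentFactor_iff] at h
    obtain ⟨m, hm⟩ := h
    exact ⟨m, by rw [← Subgroup.map_lowerCentralSeries]; exact Subgroup.map_mono hm⟩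

/-- A nilpotent normal series of length `k` from `N` to `⊤`. -/
def Ser {G : Type} [Group G] (N : Subgroup G) (k : ℕ) : Prop :=
  ∃ c : ℕ → Subgroup G, c 0 = N ∧ c k = ⊤ ∧ (∀ i, (c i).Normal) ∧ (∀ i, c i ≤ c (i + 1)) ∧
    ∀ i, nilpotentFactor (c i) (c (i + 1))

theorem nilpotentFactor_self {G : Type} [Group G] {N M : Subgroup G} (h : M ≤ N) :
    nilpotentFactor N M := ⟨0, h⟩

theorem Ser.mono {G : Type} [Group G] {N : Subgroup G} {k l : ℕ} (h : Ser N k) (hkl : k ≤ l) :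
    Ser N l := by
  obtain ⟨c, h0, h1, h2, h3, h4⟩ := h
  refine ⟨c, h0, ?_, h2, h3, h4⟩
  exact top_le_iff.mp (h1 ▸ monotone_nat_of_le_succ h3 hkl)

theorem Ser.inf {G : Type} [Group G] {N M : Subgroup G} {k : ℕ} (h : Ser N k) (h' : Ser M k) :
    Ser (N ⊓ M) k := by
  obtain ⟨c, h0, h1, h2, h3, h4⟩ := h
  obtain ⟨d, g0, g1, g2, g3, g4⟩ := h'
  refine ⟨fun i => c i ⊓ d i, by simp [h0, g0], by simp [h1, g1], ?_, ?_, ?_⟩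
  · intro i
    have := h2 i
    have := g2 i
    infer_instance
  · exact fun i => inf_le_inf (h3 i) (g3 i)
  · intro i
    obtain ⟨a, ha⟩ := (nilpotentFactor_iff _ _).mp (h4 i)
    obtain ⟨b, hb⟩ := (nilpotentFactor_iff _ _).mp (g4 i)
    refine (nilpotentFactor_iff _ _).mpr ⟨max a b, le_inf ?_ ?_⟩
    · exact ((Subgroup.lowerCentralSeries_antitone _ (le_max_left a b)).trans
        (Subgroup.lowerCentralSeries_mono a inf_le_left)).trans ha
    · exact ((Subgroup.lowerCentralSeries_antitone _ (le_max_right a b)).trans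
        (Subgroup.lowerCentralSeries_mono b inf_le_right)).trans hb

theorem Ser.cons {G : Type} [Group G] {N M : Subgroup G} {k : ℕ} (hN : N.Normal) (h : Ser M k)
    (hNM : N ≤ M) (hn : nilpotentFactor N M) : Ser N (k + 1) := by
  obtain ⟨c, h0, h1, h2, h3, h4⟩ := h
  refine ⟨fun i => Nat.casesOn i N c, rfl, h1, ?_, ?_, ?_⟩
  · rintro (_ | i)
    exacts [hN, h2 i]
  · rintro (_ | i)
    exacts [show N ≤ c 0 from h0 ▸ hNM, h3 i]
  · rintro (_ | i)
    exacts [show nilpotentFactor N (c 0) from h0 ▸ hn, h4 i]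

theorem Ser.frattini {G : Type} [Group G] [Finite G] {N M : Subgroup G} {k : ℕ} (hN : N.Normal)
    (hM : M.Normal) (h : Ser M k) (hNM : N ≤ M) (hNt : N ≠ ⊤)
    (hf : ∀ H : Subgroup G, IsCoatom H → N ≤ H → M ≤ H) : Ser N k := by
  obtain ⟨c, h0, h1, h2, h3, h4⟩ := h
  have hk : k ≠ 0 := by
    rintro rfl
    obtain ⟨H, hH, hNH⟩ := (eq_top_or_exists_le_coatom N).resolve_left hNt
    have := hf H hH hNH
    rw [← h0, h1] at this
    exact hH.1 (top_le_iff.mp this)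
  obtain ⟨k, rfl⟩ := Nat.exists_eq_succ_of_ne_zero hk
  have h01 : M ≤ c 1 := h0 ▸ h3 0
  have : (c 1).Normal := h2 1
  refine ⟨fun i => Nat.casesOn i N (fun j => c (j + 1)), rfl, h1, ?_, ?_, ?_⟩
  · rintro (_ | i)
    exacts [hN, h2 _]
  · rintro (_ | i)
    exacts [hNM.trans h01, h3 _]
  · rintro (_ | i)
    · exact nilpotentFactor_frattini N M (c 1) hNM h01 hf (h0 ▸ h4 0)
    · exact h4 _

theorem fittingHeight_le_of_ser {G : Type} [Group G] {k : ℕ} (h : Ser (⊥ : Subgroup G) k) :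
    fittingHeight G ≤ k := by
  obtain ⟨c, h0, h1, h2, h3, h4⟩ := h
  exact Nat.sInf_le ⟨fun i => c i, h0, by simpa using h1, fun i => h2 i,
    fun i => by simpa using h3 i, fun i => by simpa using h4 i⟩

/-- minimal normal subgroup above `N` with abelian factor -/
theorem exists_min_normal {G : Type} [Group G] [Finite G] (hsol : IsSolvable G) (N : Subgroup G)
    (hN : N.Normal) (hNt : N ≠ ⊤) : ∃ M : Subgroup G, M.Normal ∧ N < M ∧ ⁅M, M⁆ ≤ N ∧
      ∀ K : Subgroup G, K.Normal → N < K → K ≤ M → K = M := by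
  obtain ⟨M, hM⟩ := (Set.toFinite {K : Subgroup G | K.Normal ∧ N < K}).exists_minimal
    ⟨⊤, inferInstance, lt_top_iff_ne_top.mpr hNt⟩
  have hMn : M.Normal := hM.1.1
  have hmin : ∀ K : Subgroup G, K.Normal → N < K → K ≤ M → K = M :=
    fun K hK h1 h2 => le_antisymm h2 (hM.2 ⟨hK, h1⟩ h2)
  refine ⟨M, hMn, hM.1.2, ?_, hmin⟩
  by_contra hcon
  have hlt : N < N ⊔ ⁅M, M⁆ := lt_of_le_of_ne le_sup_left
    (fun h => hcon (by rw [h]; exact le_sup_right))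
  have heq := hmin (N ⊔ ⁅M, M⁆) inferInstance hlt
    (sup_le hM.1.2.le (Subgroup.commutator_le_left M M))
  have key : ∀ n, M.map (QuotientGroup.mk' N) ≤ derivedSeries (G ⧸ N) n := by
    intro n
    induction n with
    | zero => simp
    | succ n ih =>
      rw [derivedSeries_succ]
      refine le_trans ?_ (Subgroup.commutator_mono ih ih)
      rw [← Subgroup.map_commutator]
      conv_lhs => rw [← heq]
      rw [Subgroup.map_sup]
      refine sup_le ?_ le_rfl
      rw [(Subgroup.map_eq_bot_iff _).mpr (by rw [QuotientGroup.ker_mk'])]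
      exact bot_le
  have : Group.IsSolvable G := hsol
  obtain ⟨n, hn⟩ := (Group.isSolvable_def (G ⧸ N)).mp inferInstance
  have := key n
  rw [hn, le_bot_iff, Subgroup.map_eq_bot_iff, QuotientGroup.ker_mk'] at this
  exact absurd hM.1.2 (not_lt_of_ge this)

theorem simple_of_irreducible {G : Type} [Group G] [Finite G] {V : Type} [AddCommGroup V]
    [Module ℂ V] [Module.Finite ℂ V] (ρ : Representation ℂ G V) (h : ρ.IsIrreducible) :
    Simple (FDRep.of ρ) := by
  have : NeZero (Nat.card G : ℂ) := ⟨by exact_mod_cast Nat.card_pos.ne'⟩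
  rw [FDRep.simple_iff_end_is_rank_one]
  have hb := (Representation.IsIrreducible.algebraMap_intertwiningMap_bijective_of_isAlgClosed
    (ρ := ρ)).2
  have hnt : Nontrivial V := by
    by_contra hc
    rw [not_nontrivial_iff_subsingleton] at hc
    exact bot_ne_top (α := Subrepresentation ρ) (by
      ext x
      have : x = 0 := Subsingleton.elim _ _
      subst this
      simp)
  have hid : (𝟙 (FDRep.of ρ)) ≠ 0 := by
    intro h0
    obtain ⟨v, hv⟩ := exists_ne (0 : V)
    apply hv
    have := congrArg (fun f : FDRep.of ρ ⟶ FDRep.of ρ => f.hom.hom.hom v) h0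
    exact this
  rw [finrank_eq_one_iff_of_nonzero' _ hid]
  intro f
  let F : Representation.IntertwiningMap ρ ρ :=
    { f.hom.hom.hom with
      isIntertwining' := fun g => by
        have := f.comm g
        have := congrArg (fun t => t.hom.hom) this
        exact this }
  obtain ⟨c, hc⟩ := hb F
  refine ⟨c, ?_⟩
  ext v
  have := congrArg (fun t : Representation.IntertwiningMap ρ ρ => t v) hc
  exact this

theorem mem_charKer_of {G : Type} [Group G] {V : Type} [AddCommGroup V]
    [Module ℂ V] [Module.Finite ℂ V] (ρ : Representation ℂ G V) (g : G) :
    g ∈ charKer (FDRep.of ρ) ↔ ρ g = 1 := by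
  rw [charKer, MonoidHom.mem_ker, Units.ext_iff]
  rfl

theorem exists_irr {G : Type} [Group G] [Finite G] (m : G) (n : ℕ) :
    ∀ (V : Type) [AddCommGroup V] [Module ℂ V] [Module.Finite ℂ V] (ρ : Representation ℂ G V),
    Module.finrank ℂ V = n → ρ m ≠ 1 →
    ∃ (U : Type) (_ : AddCommGroup U) (_ : Module ℂ U) (_ : Module.Finite ℂ U)
      (τ : Representation ℂ G U), τ.IsIrreducible ∧ Module.finrank ℂ U ≤ n ∧ τ m ≠ 1 ∧
      ∀ g, ρ g = 1 → τ g = 1 := by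
  have : NeZero (Nat.card G : ℂ) := ⟨by exact_mod_cast Nat.card_pos.ne'⟩
  induction n using Nat.strong_induction_on with
  | _ n ih =>
  intro V _ _ _ ρ hV hm
  by_cases hirr : ρ.IsIrreducible
  · exact ⟨V, _, _, inferInstance, ρ, hirr, hV.le, hm, fun _ h => h⟩
  have step : ∀ σ : Subrepresentation ρ, σ ≠ ⊤ → (∃ v ∈ σ.toSubmodule, ρ m v ≠ v) →
      ∃ (U : Type) (_ : AddCommGroup U) (_ : Module ℂ U) (_ : Module.Finite ℂ U)
      (τ : Representation ℂ G U), τ.IsIrreducible ∧ Module.finrank ℂ U ≤ n ∧ τ m ≠ 1 ∧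
      ∀ g, ρ g = 1 → τ g = 1 := by
    rintro σ hσ ⟨v, hv, hmv⟩
    have hlt : Module.finrank ℂ σ.toSubmodule < n := by
      rw [← hV]
      apply Submodule.finrank_lt
      intro h
      exact hσ (Subrepresentation.toSubmodule_injective h)
    obtain ⟨U, i1, i2, i3, τ, h1, h2, h3, h4⟩ := ih _ hlt σ.toSubmodule σ.toRepresentation rfl (by
      intro h
      apply hmv
      have := congrArg (fun t => ((t ⟨v, hv⟩ : σ.toSubmodule) : V)) h
      exact this)
    refine ⟨U, i1, i2, i3, τ, h1, h2.trans hlt.le, h3, fun g hg => h4 g ?_⟩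
    ext x
    change ρ g x = x
    rw [hg]; rfl
  have hnt : Nontrivial V := by
    by_contra hc
    rw [not_nontrivial_iff_subsingleton] at hc
    exact hm (Subsingleton.elim _ _)
  have hbt : (⊥ : Subrepresentation ρ) ≠ ⊤ := by
    intro h
    have := congrArg Subrepresentation.toSubmodule h
    exact bot_ne_top (α := Submodule ℂ V) this
  have : ∃ σ : Subrepresentation ρ, σ ≠ ⊥ ∧ σ ≠ ⊤ := by
    by_contra hc
    push Not at hc
    have : Nontrivial (Subrepresentation ρ) := ⟨⟨_, _, hbt⟩⟩
    exact hirr ⟨fun a => or_iff_not_imp_left.mpr (hc a)⟩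
  obtain ⟨σ, hσb, hσt⟩ := this
  obtain ⟨σ', hcompl⟩ := exists_isCompl σ
  by_cases hc : ∃ v ∈ σ.toSubmodule, ρ m v ≠ v
  · exact step σ hσt hc
  by_cases hc' : ∃ v ∈ σ'.toSubmodule, ρ m v ≠ v
  · refine step σ' ?_ hc'
    rintro rfl
    exact hσb (by simpa using hcompl.inf_eq_bot)
  exfalso
  push Not at hc hc'
  apply hm
  ext v
  have hv : v ∈ σ.toSubmodule ⊔ σ'.toSubmodule := by
    rw [← Subrepresentation.toSubmodule_sup, hcompl.sup_eq_top]
    exact Submodule.mem_top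
  obtain ⟨a, ha, b, hb, rfl⟩ := Submodule.mem_sup.mp hv
  rw [map_add, hc a ha, hc' b hb]
  rfl

/-- An irreducible representation with `M/ker` abelian has degree at most `|G : M|`. -/
theorem finrank_le_index {G : Type} [Group G] [Finite G] {U : Type} [AddCommGroup U] [Module ℂ U]
    [Module.Finite ℂ U] (τ : Representation ℂ G U) (h : τ.IsIrreducible) (M : Subgroup G)
    (hM : ∀ a ∈ M, ∀ b ∈ M, τ a * τ b = τ b * τ a) : Module.finrank ℂ U ≤ M.index := by
  have hnt : Nontrivial U := by
    by_contra hc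
    rw [not_nontrivial_iff_subsingleton] at hc
    exact bot_ne_top (α := Subrepresentation τ) (by
      ext x
      have : x = 0 := Subsingleton.elim _ _
      subst this
      simp)
  -- common eigenvector
  obtain ⟨v, hv0, hv⟩ : ∃ v : U, v ≠ 0 ∧ ∀ m ∈ M, ∃ c : ℂ, τ m v = c • v := by
    obtain ⟨E, ⟨hE0, hEinv⟩, hEmin⟩ := WellFounded.has_min
      (wellFounded_lt : WellFounded (fun a b : Submodule ℂ U => a < b))
      {E : Submodule ℂ U | E ≠ ⊥ ∧ ∀ m ∈ M, ∀ x ∈ E, τ m x ∈ E} ⟨⊤, top_ne_bot, by simp⟩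
    obtain ⟨v, hvE, hv0⟩ := Submodule.exists_mem_ne_zero_of_ne_bot hE0
    refine ⟨v, hv0, fun m hm => ?_⟩
    have : Nontrivial E := Submodule.nontrivial_iff_ne_bot.mpr hE0
    obtain ⟨c, hc⟩ := Module.End.exists_eigenvalue ((τ m).restrict (hEinv m hm))
    obtain ⟨w, hw⟩ := hc.exists_hasEigenvector
    refine ⟨c, ?_⟩
    let E' : Submodule ℂ U := E ⊓ LinearMap.ker (τ m - c • 1)
    have hmem : ∀ x, x ∈ E' ↔ x ∈ E ∧ τ m x = c • x := by
      intro x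
      simp [E', sub_eq_zero]
    have hE' : E' ∈ {E : Submodule ℂ U | E ≠ ⊥ ∧ ∀ m ∈ M, ∀ x ∈ E, τ m x ∈ E} := by
      refine ⟨?_, ?_⟩
      · refine (Submodule.ne_bot_iff _).mpr ⟨w, (hmem _).mpr ⟨w.2, ?_⟩, ?_⟩
        · exact congrArg Subtype.val hw.apply_eq_smul
        · simpa using hw.2
      · intro a ha x hx
        rw [hmem] at hx ⊢
        refine ⟨hEinv a ha x hx.1, ?_⟩
        have := congrArg (fun t => t x) (hM m hm a ha)
        simp only [Module.End.mul_apply] at this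
        rw [this, hx.2, map_smul]
    have hle : E ≤ E' := by
      by_contra hc
      exact hEmin E' hE' (lt_of_le_of_ne inf_le_left (fun h => hc h.ge))
    exact ((hmem v).mp (hle hvE)).2
  let b : G ⧸ M → U := fun q => τ q.out v
  have hb : ∀ g : G, τ g v ∈ Submodule.span ℂ (Set.range b) := by
    intro g
    obtain ⟨m, hm⟩ := QuotientGroup.mk_out_eq_mul M g
    obtain ⟨c, hc⟩ := hv m⁻¹ (M.inv_mem m.2)
    have : τ g v = c • b (g : G ⧸ M) := by
      have hg : g = (g : G ⧸ M).out * (m : G)⁻¹ := by rw [hm]; group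
      conv_lhs => rw [hg]
      rw [map_mul, Module.End.mul_apply, hc, map_smul]
    rw [this]
    exact Submodule.smul_mem _ _ (Submodule.subset_span ⟨_, rfl⟩)
  let σ : Subrepresentation τ := ⟨Submodule.span ℂ (Set.range b), by
    intro g x hx
    have : Submodule.span ℂ (Set.range b) ≤ (Submodule.span ℂ (Set.range b)).comap (τ g) := by
      rw [Submodule.span_le]
      rintro _ ⟨q, rfl⟩
      change τ g (τ q.out v) ∈ Submodule.span ℂ (Set.range b)
      rw [← Module.End.mul_apply, ← map_mul]
      exact hb _
    exact this hx⟩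
  have hσ : σ = ⊤ := by
    refine (eq_bot_or_eq_top σ).resolve_left ?_
    intro h0
    apply hv0
    have h1 : τ 1 v ∈ σ.toSubmodule := hb 1
    rw [h0] at h1
    have h2 : τ 1 v ∈ (⊥ : Submodule ℂ U) := h1
    simpa using h2
  have hspan : Submodule.span ℂ (Set.range b) = ⊤ := congrArg Subrepresentation.toSubmodule hσ
  have := Fintype.ofFinite (G ⧸ M)
  have := finrank_range_le_card (R := ℂ) b
  rw [Set.finrank, hspan, finrank_top] at this
  rwa [Subgroup.index, Nat.card_eq_fintype_card]

/-- The permutation representation on functions on `G ⧸ H`. -/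
noncomputable def permRep {G : Type} [Group G] (H : Subgroup G) :
    Representation ℂ G (G ⧸ H → ℂ) where
  toFun g := LinearMap.funLeft ℂ ℂ (fun x => g⁻¹ • x)
  map_one' := by ext; simp [LinearMap.funLeft]
  map_mul' a b := by ext; simp [LinearMap.funLeft, mul_smul, Function.comp_def]

theorem permRep_apply {G : Type} [Group G] (H : Subgroup G) (g : G) (f : G ⧸ H → ℂ) (x : G ⧸ H) :
    permRep H g f x = f (g⁻¹ • x) := rfl

theorem exists_irr_perm {G : Type} [Group G] [Finite G] (N H : Subgroup G) (hN : N.Normal)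
    (hNH : N ≤ H) (m : G) (hm : m ∉ H) :
    ∃ (U : Type) (_ : AddCommGroup U) (_ : Module ℂ U) (_ : Module.Finite ℂ U)
      (τ : Representation ℂ G U), τ.IsIrreducible ∧ Module.finrank ℂ U < H.index ∧ τ m ≠ 1 ∧
      ∀ g ∈ N, τ g = 1 := by
  classical
  have := Fintype.ofFinite (G ⧸ H)
  let S : (G ⧸ H → ℂ) →ₗ[ℂ] ℂ := ∑ x, LinearMap.proj x
  have hS : ∀ f, S f = ∑ x, f x := fun f => by simp [S]
  let σ : Subrepresentation (permRep H) := ⟨LinearMap.ker S, by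
    intro g f hf
    rw [LinearMap.mem_ker, hS] at hf ⊢
    rw [← hf]
    exact Fintype.sum_equiv (MulAction.toPerm g⁻¹) _ _ (fun x => rfl)⟩
  have hlt : Module.finrank ℂ σ.toSubmodule < H.index := by
    rw [Subgroup.index, Nat.card_eq_fintype_card, ← Module.finrank_fintype_fun_eq_card ℂ]
    apply Submodule.finrank_lt
    intro h
    have h1 : Pi.single ((1 : G) : G ⧸ H) (1 : ℂ) ∈ LinearMap.ker S := by
      change _ ∈ σ.toSubmodule
      rw [h]; trivial
    rw [LinearMap.mem_ker, hS] at h1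
    simp at h1
  let x0 : G ⧸ H := ((1 : G) : G ⧸ H)
  let x1 : G ⧸ H := m • x0
  have hne : x1 ≠ x0 := by
    intro h
    apply hm
    have : ((m * 1 : G) : G ⧸ H) = ((1 : G) : G ⧸ H) := h
    rw [QuotientGroup.eq] at this
    simpa using this
  let f : G ⧸ H → ℂ := Pi.single x1 1 - Pi.single x0 1
  have hf : f ∈ σ.toSubmodule := by
    change f ∈ LinearMap.ker S
    rw [LinearMap.mem_ker, hS]
    simp [f]
  have hmf : σ.toRepresentation m ≠ 1 := by
    intro h
    have h1 : permRep H m f = f := congrArg (fun t => ((t ⟨f, hf⟩ : σ.toSubmodule) : G ⧸ H → ℂ)) h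
    have h2 := congrFun h1 x1
    rw [permRep_apply] at h2
    have h3 : m⁻¹ • x1 = x0 := by simp [x1]
    rw [h3] at h2
    simp only [f, Pi.sub_apply, Pi.single_eq_same, Pi.single_eq_of_ne hne,
      Pi.single_eq_of_ne hne.symm] at h2
    norm_num at h2
  obtain ⟨U, i1, i2, i3, τ, h1, h2, h3, h4⟩ := exists_irr m _ σ.toSubmodule σ.toRepresentation rfl hmf
  refine ⟨U, i1, i2, i3, τ, h1, h2.trans_lt hlt, h3, fun g hg => h4 g ?_⟩
  ext u x
  change permRep H g u x = u.1 x
  rw [permRep_apply]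
  obtain ⟨y, rfl⟩ := QuotientGroup.mk_surjective x
  refine congrArg u.1 ?_
  change ((g⁻¹ * y : G) : G ⧸ H) = (y : G ⧸ H)
  rw [QuotientGroup.eq]
  apply hNH
  have := hN.conj_mem g hg y⁻¹
  simpa [mul_assoc] using this

/-- codegrees of irreducible characters with `N` in the kernel -/
def codRel {G : Type} [Group G] (N : Subgroup G) : Set ℕ :=
  {n | ∃ V : FDRep ℂ G, Simple V ∧ N ≤ charKer V ∧ codeg V = n}

theorem codRel_le {G : Type} [Group G] [Finite G] {N : Subgroup G} {n : ℕ} (h : n ∈ codRel N) :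
    n ≤ N.index := by
  obtain ⟨V, -, hN, rfl⟩ := h
  exact (Nat.div_le_self _ _).trans (Subgroup.index_antitone hN)

theorem codRel_finite {G : Type} [Group G] [Finite G] (N : Subgroup G) : (codRel N).Finite :=
  (Set.finite_Iic N.index).subset (fun _ h => codRel_le h)

theorem codRel_anti {G : Type} [Group G] {N M : Subgroup G} (h : N ≤ M) : codRel M ⊆ codRel N := by
  rintro n ⟨V, h1, h2, h3⟩
  exact ⟨V, h1, h.trans h2, h3⟩

theorem codRel_top_nonempty {G : Type} [Group G] [Finite G] :
    (codRel (⊤ : Subgroup G)).Nonempty := by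
  refine ⟨_, FDRep.of (Representation.trivial ℂ G ℂ), simple_of_irreducible _ ?_, ?_, rfl⟩
  · have hbt : (⊥ : Subrepresentation (Representation.trivial ℂ G ℂ)) ≠ ⊤ := by
      intro h
      have := congrArg Subrepresentation.toSubmodule h
      exact bot_ne_top (α := Submodule ℂ ℂ) this
    have : Nontrivial (Subrepresentation (Representation.trivial ℂ G ℂ)) := ⟨⟨_, _, hbt⟩⟩
    refine ⟨fun σ => ?_⟩
    rcases eq_bot_or_eq_top (α := Submodule ℂ ℂ) σ.toSubmodule with h | h
    · exact Or.inl (Subrepresentation.toSubmodule_injective h)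
    · exact Or.inr (Subrepresentation.toSubmodule_injective h)
  · intro g _
    rw [mem_charKer_of]
    rfl

/-- The key step: a new codegree. -/
theorem exists_new_cod {G : Type} [Group G] [Finite G] (N M H : Subgroup G) (hN : N.Normal)
    (hM : M.Normal) (hNM : N ≤ M) (hab : ⁅M, M⁆ ≤ N)
    (hall : ∀ K : Subgroup G, K.Normal → N < K → M ≤ K)
    (hH : IsCoatom H) (hNH : N ≤ H) (hMH : ¬ M ≤ H) : ∃ n ∈ codRel N, n ∉ codRel M := by
  obtain ⟨m, hmM, hmH⟩ := SetLike.not_le_iff_exists.mp hMH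
  obtain ⟨U, i1, i2, i3, τ, hirr, hdim, hτm, hτN⟩ := exists_irr_perm N H hN hNH m hmH
  have hNk : N ≤ charKer (FDRep.of τ) := fun g hg => (mem_charKer_of τ g).mpr (hτN g hg)
  have hker : charKer (FDRep.of τ) = N := by
    by_contra hne
    have hn : (charKer (FDRep.of τ)).Normal := MonoidHom.normal_ker _
    have := hall _ hn (lt_of_le_of_ne hNk (Ne.symm hne)) hmM
    exact hτm ((mem_charKer_of τ m).mp this)
  refine ⟨_, ⟨FDRep.of τ, simple_of_irreducible τ hirr, hNk, rfl⟩, fun hmem => ?_⟩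
  have hle := codRel_le hmem
  have hd1 : Module.finrank ℂ U ≤ M.index := by
    refine finrank_le_index τ hirr M (fun a ha b hb => ?_)
    have h1 := hτN _ (hab (Subgroup.commutator_mem_commutator ha hb))
    rw [commutatorElement_def] at h1
    have h2 : a * b = (a * b * a⁻¹ * b⁻¹) * (b * a) := by group
    rw [← map_mul, h2, map_mul, h1, one_mul, map_mul]
  have hcod : codeg (FDRep.of τ) = N.index / Module.finrank ℂ U := by
    rw [codeg, hker]
  have hidx : H.index ≤ N.relIndex M := by
    have htop : M ⊔ H = ⊤ := by
      rw [sup_comm]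
      exact hH.2 _ (left_lt_sup.mpr hMH)
    have h1 : H.relIndex M = H.index := by
      have e1 : M.relIndex H = M.index := by
        rw [← Subgroup.relIndex_sup_left, htop, Subgroup.relIndex_top_right]
      have e2 := Subgroup.relIndex_mul_index (inf_le_right : H ⊓ M ≤ M)
      have e3 := Subgroup.relIndex_mul_index (inf_le_left : H ⊓ M ≤ H)
      rw [Subgroup.inf_relIndex_right] at e2
      rw [Subgroup.inf_relIndex_left, e1] at e3
      rw [← e3, mul_comm] at e2
      exact Nat.eq_of_mul_eq_mul_left
        (Nat.pos_of_ne_zero Subgroup.index_ne_zero_of_finite) e2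
    rw [← h1]
    exact Nat.le_of_dvd (Nat.pos_of_ne_zero Subgroup.index_ne_zero_of_finite)
      (Subgroup.relIndex_dvd_of_le_left M hNH)
  have hmul : N.relIndex M * M.index = N.index := Subgroup.relIndex_mul_index hNM
  have hpos : 0 < Module.finrank ℂ U := by
    rw [Module.finrank_pos_iff]
    by_contra hc
    rw [not_nontrivial_iff_subsingleton] at hc
    exact hτm (Subsingleton.elim _ _)
  rw [hcod] at hle
  have : M.index + 1 ≤ N.index / Module.finrank ℂ U := by
    rw [Nat.le_div_iff_mul_le hpos, ← hmul]
    have : Module.finrank ℂ U + 1 ≤ N.relIndex M := lt_of_lt_of_le hdim hidx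
    nlinarith
  omega

theorem main_aux_s9 {G : Type} [Group G] [Finite G] (hsol : IsSolvable G) (N : Subgroup G) :
    N.Normal → ∃ k, Ser N k ∧ k + 1 ≤ (codRel N).ncard := by
  induction N using WellFoundedGT.induction with
  | _ N ih =>
  intro hN
  by_cases hNt : N = ⊤
  · subst hNt
    refine ⟨0, ⟨fun _ => ⊤, rfl, rfl, fun _ => inferInstance, fun _ => le_rfl,
      fun _ => nilpotentFactor_self le_rfl⟩, ?_⟩
    have := (Set.ncard_pos (codRel_finite (⊤ : Subgroup G))).mpr codRel_top_nonempty
    omega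
  obtain ⟨M, hM, hNM, hab, hmin⟩ := exists_min_normal hsol N hN hNt
  obtain ⟨k, hk, hkc⟩ := ih M hNM hM
  have hsub := Set.ncard_le_ncard (codRel_anti hNM.le) (codRel_finite N)
  by_cases hall : ∀ K : Subgroup G, K.Normal → N < K → M ≤ K
  · by_cases hf : ∀ H : Subgroup G, IsCoatom H → N ≤ H → M ≤ H
    · exact ⟨k, hk.frattini hN hM hNM.le hNt hf, hkc.trans hsub⟩
    · push Not at hf
      obtain ⟨H, hH, hNH, hMH⟩ := hf
      obtain ⟨n, hn, hn'⟩ := exists_new_cod N M H hN hM hNM.le hab hall hH hNH hMH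
      have hlt : (codRel M).ncard < (codRel N).ncard :=
        Set.ncard_lt_ncard ⟨codRel_anti hNM.le, fun h => hn' (h hn)⟩ (codRel_finite N)
      exact ⟨k + 1, hk.cons hN hNM.le ⟨1, hab⟩, by omega⟩
  · push Not at hall
    obtain ⟨K, hK, hNK, hMK⟩ := hall
    obtain ⟨l, hl, hlc⟩ := ih K hNK hK
    have hsub' := Set.ncard_le_ncard (codRel_anti hNK.le) (codRel_finite N)
    have hinf : M ⊓ K = N := by
      by_contra hne
      have := hmin (M ⊓ K) inferInstance (lt_of_le_of_ne (le_inf hNM.le hNK.le) (Ne.symm hne))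
        inf_le_left
      exact hMK (inf_eq_left.mp this)
    refine ⟨max k l, ?_, ?_⟩
    · rw [← hinf]
      exact (hk.mono (le_max_left k l)).inf (hl.mono (le_max_right k l))
    · rcases max_choice k l with h | h <;> rw [h] <;> omega

theorem stmt_9 {G : Type} [Group G] [Finite G] [Nontrivial G] (hsol : IsSolvable G) :
    fittingHeight G ≤ (codSet G).ncard - 1 := by
  obtain ⟨k, hk, hkc⟩ := main_aux_s9 hsol (⊥ : Subgroup G) inferInstance
  have : codRel (⊥ : Subgroup G) = codSet G := by
    ext n
    simp [codRel, codSet]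
  rw [this] at hkc
  have := fittingHeight_le_of_ser hk
  omega
end
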